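/- arXiv:1808.04763 — 2 statements merged into one kernel-verified Lean document; each statement's English description precedes it below -/
import Mathlib

section
/- Let u : ℝ × [0,1] → ℂ be a (sufficiently regular) 2π-periodic-in-space solution of ∂ₜu = i(∂ₓₓu + V(x,t)u), where V is a 2π-periodic-in-space bounded complex potential with |V| ≤ L, and assume ∫_{[0,2π]} |u(x,0)|² dx = c₀² and sup_{0≤t≤1} ∫_{[0,2π]}(|u(x,t)|² + |∂ₓu(x,t)|²) dx = A² < ∞. Then there exist a universal constant c₁ and t* > 0 (t* = min(256A/(c₀L), 2⁻¹⁴(c₀/A)⁴, 4π², 1/L²)) such that for every t with 0 < t < t*: (e^{c₁/t}/t) · ∫_{t/4}^{3t} ∫_{{y ∈ [0,2π] : dist(y + 2π s/t, 2πℤ) < 8π√t or dist(y − 2π s/t, 2πℤ) < 8π√t}} ( |u(y,s)|² + s|∂_y u(y,s)|² ) dy ds ≥ c₀². -/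
/-!
The right-hand side is bounded below already by its part with `s ∈ [t, 2t]`, the zeroth order term
and one of the two tubes, with `c₁ = 1`; no Carleman estimate is needed.

Let `χ` be a `2π`-periodic cutoff (`bump`) bounded below near `2πℤ`, at scale `√t`, and
supported in the `8π√t`-neighbourhood. For a fixed `s ∈ [t, 2t]`, put `χ_s(y) = χ(y + 2πs/t)`. The
energy identity for `∫ χ_s |u(·,σ)|²` on `0 ≤ σ ≤ s` gives (`Sol.energy_le`)
`∫ χ_s |u(·,0)|² ≤ ∫ χ_s |u(·,s)|² + ∫₀^{2t} ∫ (|∂χ_s| + 2L χ_s) (|u|² + |∂ₓu|²)`,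
whose first term on the right is at most the mass in the tube at time `s`. When `s` runs over
`[t, 2t]`, the cutoff sweeps the circle exactly once, so averaging in `s` replaces every weight by
its mean (`integral_translate`, `Sol.averaged_energy`):
`(t/2π) X c₀² ≤ ∫_t^{2t} (mass in the tube) + (t/2π) K · 2t A²`,
with `X = ∫ χ ≥ 9√t` and `K = ∫ (|∂χ| + 2L χ) ≤ 36π`. As `128 √t A² ≤ c₀²`, the last term is
absorbed, and the mass in the tubes is at least `t √t c₀² ≥ t e^{-1/t} c₀²` (`Sol.lower_bound`).

The delicate point is the energy identity, because `u` is only separately regular: neither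
`∂ₜu` nor `∂ₓₓu` is assumed bounded in `(x,t)`, so differentiation under the integral sign needs a
justification. It is allowed at a time `a` from the right as soon as `‖u(·,t) - u(·,a)‖_{L²}` is
`O(t - a)` (`Sol.RightLip`, `Sol.hasDeriv_energy`), and this holds at every `a` by a Baire category
argument in the spirit of the Looman–Menchoff theorem (`Sol.rightLip`): otherwise, on some
portion of the closure `G` of the set of bad times `∂ₓₓu` is uniformly bounded, and the Lipschitz
bound propagates through that portion, across points of `G` by the pointwise bound on `∂ₜu`
(`Sol.eventually_nrm_sub_le`) and across the gaps of `G` by the energy inequality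
(`Sol.nrm_sub_le_of_rightLip`).
-/

open MeasureTheory Real Set

noncomputable section

open Filter Topology

/-! ### The `L²` norm over a set and convergence of integrals -/

theorem sq_integral_mul_le {S : Set ℝ} (hS : IsCompact S) {a b : ℝ → ℝ}
    (ha : Continuous a) (hb : Continuous b) :
    (∫ y in S, a y * b y) ^ 2 ≤ (∫ y in S, a y ^ 2) * ∫ y in S, b y ^ 2 := by
  have hi : ∀ f : ℝ → ℝ, Continuous f → IntegrableOn f S volume :=
    fun f hf => hf.continuousOn.integrableOn_compact hS
  have key : ∀ x : ℝ, 0 ≤ (∫ y in S, b y ^ 2) * (x * x)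
      + (-2 * ∫ y in S, a y * b y) * x + ∫ y in S, a y ^ 2 := by
    intro x
    have h1 : 0 ≤ ∫ y in S, (a y - x * b y) ^ 2 := integral_nonneg fun y => sq_nonneg _
    have h2 : ∫ y in S, (a y - x * b y) ^ 2
        = ∫ y in S, ((b y ^ 2 * (x * x) + (a y * b y) * (-2 * x)) + a y ^ 2) := by
      congr 1; ext y; ring
    rw [h2, integral_add (hi _ (by fun_prop)) (hi _ (by fun_prop)),
      integral_add (hi _ (by fun_prop)) (hi _ (by fun_prop)),
      integral_mul_const, integral_mul_const] at h1
    linarith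
  have := discrim_le_zero key
  unfold discrim at this
  nlinarith

/-- The `L²` norm of `f` over the set `S`. -/
def nrm (S : Set ℝ) (f : ℝ → ℂ) : ℝ := √(∫ y in S, ‖f y‖ ^ 2)

theorem nrm_nonneg (S : Set ℝ) (f : ℝ → ℂ) : 0 ≤ nrm S f := Real.sqrt_nonneg _

theorem nrm_sq (S : Set ℝ) (f : ℝ → ℂ) : nrm S f ^ 2 = ∫ y in S, ‖f y‖ ^ 2 :=
  Real.sq_sqrt (integral_nonneg fun _ => by positivity)

theorem nrm_add_le {S : Set ℝ} (hS : IsCompact S) {f g : ℝ → ℂ}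
    (hf : Continuous f) (hg : Continuous g) :
    nrm S (fun y => f y + g y) ≤ nrm S f + nrm S g := by
  have hi : ∀ f : ℝ → ℝ, Continuous f → IntegrableOn f S volume :=
    fun f hf => hf.continuousOn.integrableOn_compact hS
  have h0 := nrm_nonneg S f
  have h0' := nrm_nonneg S g
  apply Real.sqrt_le_iff.2 ⟨by positivity, ?_⟩
  have cs := sq_integral_mul_le hS hf.norm hg.norm
  rw [← nrm_sq, ← nrm_sq, ← mul_pow] at cs
  have cs' := abs_le_of_sq_le_sq' cs (by positivity)
  calc ∫ y in S, ‖f y + g y‖ ^ 2 ≤ ∫ y in S, ((‖f y‖ ^ 2 + ‖f y‖ * ‖g y‖ * 2) + ‖g y‖ ^ 2) := by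
        apply integral_mono (hi _ (by fun_prop)) (hi _ (by fun_prop))
        intro y
        have := norm_add_le (f y) (g y)
        have h3 := norm_nonneg (f y + g y)
        dsimp only
        nlinarith
    _ = nrm S f ^ 2 + (∫ y in S, ‖f y‖ * ‖g y‖) * 2 + nrm S g ^ 2 := by
        rw [integral_add (hi _ (by fun_prop)) (hi _ (by fun_prop)),
          integral_add (hi _ (by fun_prop)) (hi _ (by fun_prop)), integral_mul_const,
          nrm_sq, nrm_sq]
    _ ≤ _ := by nlinarith [cs'.2]

/-- On a finite measure space, pointwise convergence together with an `L²` bound gives convergence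
of integrals. The proof replaces `z` by the bounded truncation `z / (1 + δ² z²)`, which differs
from `z` by at most `δ z²`. -/
theorem tendsto_integral_of_sq_bound {μ : Measure ℝ} [IsFiniteMeasure μ] {ι : Type*}
    {l : Filter ι} [l.IsCountablyGenerated] {F : ι → ℝ → ℝ} {q : ℝ → ℝ} {C Q : ℝ}
    (hm : ∀ᶠ i in l, AEStronglyMeasurable (F i) μ)
    (hint : ∀ᶠ i in l, Integrable (fun y => F i y ^ 2) μ)
    (hC : ∀ᶠ i in l, ∫ y, F i y ^ 2 ∂μ ≤ C)
    (hqm : AEStronglyMeasurable q μ) (hQ : ∀ y, |q y| ≤ Q)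
    (hlim : ∀ y, Tendsto (fun i => F i y) l (𝓝 (q y))) :
    Tendsto (fun i => ∫ y, F i y ∂μ) l (𝓝 (∫ y, q y ∂μ)) := by
  rcases l.eq_or_neBot with rfl | hl
  · exact tendsto_bot
  have hC0 : 0 ≤ C := by
    obtain ⟨i, hi⟩ := hC.exists
    exact le_trans (integral_nonneg fun y => sq_nonneg _) hi
  have err : ∀ δ : ℝ, 0 < δ → ∀ z : ℝ, |z - z / (1 + δ ^ 2 * z ^ 2)| ≤ δ * z ^ 2 := by
    intro δ hδ z
    have hp : 0 < 1 + δ ^ 2 * z ^ 2 := by positivity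
    have : z - z / (1 + δ ^ 2 * z ^ 2) = δ ^ 2 * z ^ 2 * z / (1 + δ ^ 2 * z ^ 2) := by
      field_simp; ring
    rw [this, abs_div, abs_of_pos hp, div_le_iff₀ hp, abs_mul, abs_of_nonneg (by positivity)]
    have h1 : δ * |z| ≤ 1 + δ ^ 2 * z ^ 2 := by
      rw [← sq_abs z]; nlinarith [sq_nonneg (δ * |z| - 1), abs_nonneg z]
    calc δ ^ 2 * z ^ 2 * |z| = δ * z ^ 2 * (δ * |z|) := by ring
      _ ≤ _ := by gcongr
  have bd : ∀ δ : ℝ, 0 < δ → ∀ z : ℝ, |z / (1 + δ ^ 2 * z ^ 2)| ≤ 1 / δ := by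
    intro δ hδ z
    have hp : 0 < 1 + δ ^ 2 * z ^ 2 := by positivity
    rw [abs_div, abs_of_pos hp, div_le_div_iff₀ hp hδ, ← sq_abs z]
    nlinarith [sq_nonneg (δ * |z| - 1), abs_nonneg z]
  have hqi : Integrable q μ := Integrable.of_bound hqm Q (Eventually.of_forall hQ)
  have hq2 : Integrable (fun y => q y ^ 2) μ :=
    Integrable.of_bound (hqm.pow 2) (Q ^ 2) (Eventually.of_forall fun y => by
      have := hQ y
      rw [norm_pow, Real.norm_eq_abs]
      gcongr)
  have hcm : ∀ δ : ℝ, 0 < δ → Continuous fun z : ℝ => z / (1 + δ ^ 2 * z ^ 2) := by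
    intro δ hδ
    exact continuous_id.div (by fun_prop) fun z => by positivity
  set D := C + ∫ y, q y ^ 2 ∂μ + 1 with hD
  have hq20 : 0 ≤ ∫ y, q y ^ 2 ∂μ := integral_nonneg fun y => sq_nonneg _
  have hDpos : 0 < D := by positivity
  rw [Metric.tendsto_nhds]
  intro ε hε
  set δ := ε / (2 * D) with hδd
  have hδ : 0 < δ := by positivity
  have ht : Tendsto (fun i => ∫ y, F i y / (1 + δ ^ 2 * F i y ^ 2) ∂μ) l
      (𝓝 (∫ y, q y / (1 + δ ^ 2 * q y ^ 2) ∂μ)) := by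
    apply tendsto_integral_filter_of_dominated_convergence (fun _ => 1 / δ)
    · filter_upwards [hm] with i hi
      exact (hcm δ hδ).comp_aestronglyMeasurable hi
    · exact Eventually.of_forall fun i => Eventually.of_forall fun y => bd δ hδ _
    · exact integrable_const _
    · exact Eventually.of_forall fun y => ((hcm δ hδ).tendsto _).comp (hlim y)
  rw [Metric.tendsto_nhds] at ht
  filter_upwards [hm, hint, hC, ht (ε / 2) (by positivity)] with i h1 h2 h3 h4
  have comp : ∀ g : ℝ → ℝ, AEStronglyMeasurable g μ → Integrable (fun y => g y ^ 2) μ →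
      |∫ y, g y ∂μ - ∫ y, g y / (1 + δ ^ 2 * g y ^ 2) ∂μ| ≤ δ * ∫ y, g y ^ 2 ∂μ := by
    intro g hg hg2
    have hti : Integrable (fun y => g y / (1 + δ ^ 2 * g y ^ 2)) μ :=
      Integrable.of_bound ((hcm δ hδ).comp_aestronglyMeasurable hg) (1 / δ)
        (Eventually.of_forall fun y => bd δ hδ _)
    have hgi : Integrable g μ := by
      apply Integrable.mono' (hg2.add (integrable_const (1:ℝ))) hg
      refine Eventually.of_forall fun y => ?_
      simp only [Pi.add_apply, Real.norm_eq_abs]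
      rw [← sq_abs]
      nlinarith [sq_nonneg (|g y| - 1), abs_nonneg (g y)]
    rw [← integral_sub hgi hti, ← integral_const_mul]
    rw [← Real.norm_eq_abs]
    exact norm_integral_le_of_norm_le (hg2.const_mul δ)
      (Eventually.of_forall fun y => err δ hδ (g y))
  have e1 := abs_le.1 (comp _ h1 h2)
  have e2 := abs_le.1 (comp _ hqm hq2)
  rw [Real.dist_eq, abs_lt] at h4
  have e3 : δ * (C + ∫ y, q y ^ 2 ∂μ) < ε / 2 := by
    have : δ * D = ε / 2 := by rw [hδd]; field_simp
    rw [← this]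
    gcongr
    linarith
  have e4 : δ * ∫ y, F i y ^ 2 ∂μ ≤ δ * C := by gcongr
  rw [Real.dist_eq, abs_lt]
  constructor <;> linarith [h4.1, h4.2, e1.1, e1.2, e2.1, e2.2]

/-! ### Standing hypotheses and calculus of periodic functions -/

/-- The standing hypotheses: `u` is a separately regular `2π`-periodic solution on `[0,1]`, the
potential is bounded by `L`, and the `H¹` norm over a period is at most `A` at all times. -/
structure Sol (u V : ℝ → ℝ → ℂ) (L A : ℝ) : Prop where
  cx : ∀ t ∈ Icc (0:ℝ) 1, ContDiff ℝ 2 (fun x => u x t)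
  ct : ∀ x : ℝ, ContDiff ℝ 1 (fun t => u x t)
  per : ∀ x t : ℝ, u (x + 2*π) t = u x t
  eq : ∀ x : ℝ, ∀ t ∈ Icc (0:ℝ) 1, deriv (fun τ => u x τ) t
        = Complex.I * (deriv (fun y => deriv (fun z => u z t) y) x + V x t * u x t)
  bV : ∀ x t : ℝ, ‖V x t‖ ≤ L
  bA : ∀ t ∈ Icc (0:ℝ) 1, ∫ x in Icc (0:ℝ) (2*π),
        (‖u x t‖ ^ 2 + ‖deriv (fun y => u y t) x‖ ^ 2) ≤ A ^ 2

theorem exists_bound_of_periodic {E : Type*} [NormedAddCommGroup E] {f : ℝ → E}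
    (hf : Continuous f) (hp : ∀ x, f (x + 2*π) = f x) : ∃ M : ℝ, 0 ≤ M ∧ ∀ x, ‖f x‖ ≤ M := by
  obtain ⟨M, hM⟩ := (isCompact_Icc (a := (0:ℝ)) (b := 2*π)).exists_bound_of_continuousOn
    hf.continuousOn
  refine ⟨max M 0, le_max_right _ _, fun x => ?_⟩
  have hper : Function.Periodic f (2*π) := hp
  obtain ⟨y, hy, hxy⟩ := hper.exists_mem_Ico₀ (by positivity) x
  rw [hxy]
  exact (hM y ⟨hy.1, hy.2.le⟩).trans (le_max_left _ _)

theorem deriv_periodic {E : Type*} [NormedAddCommGroup E] [NormedSpace ℝ E] {f : ℝ → E}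
    (hp : ∀ x, f (x + 2*π) = f x) (x : ℝ) : deriv f (x + 2*π) = deriv f x := by
  rw [← deriv_comp_add_const]
  congr 1
  ext y; exact hp y

theorem integral_deriv_periodic {P P' : ℝ → ℝ} (hP : ∀ x, HasDerivAt P (P' x) x)
    (hc : Continuous P') (hp : ∀ x, P (x + 2*π) = P x) : ∫ y in Icc (0:ℝ) (2*π), P' y = 0 := by
  rw [integral_Icc_eq_integral_Ioc, ← intervalIntegral.integral_of_le (by positivity),
    intervalIntegral.integral_eq_sub_of_hasDerivAt (fun x _ => hP x) (hc.intervalIntegrable _ _)]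
  have := hp 0
  rw [zero_add] at this
  rw [this, sub_self]

theorem inner_I_mul_self (a : ℂ) : inner ℝ a (Complex.I * a) = 0 := by
  simp [Complex.inner]; ring

/-- Integration by parts: the term in `χ |∂z|²` vanishes because `⟪∂z, i ∂z⟫ = 0`. -/
theorem integral_inner_second_deriv {z : ℝ → ℂ} {χ : ℝ → ℝ} (hz : ContDiff ℝ 2 z)
    (hχ : ContDiff ℝ 1 χ) (pz : ∀ x, z (x + 2*π) = z x) (pχ : ∀ x, χ (x + 2*π) = χ x) :
    ∫ y in Icc (0:ℝ) (2*π), χ y * inner ℝ (z y) (Complex.I * deriv (deriv z) y)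
      = - ∫ y in Icc (0:ℝ) (2*π), deriv χ y * inner ℝ (z y) (Complex.I * deriv z y) := by
  have hz1 : ContDiff ℝ 1 (deriv z) := by
    have : ContDiff ℝ (1 + 1) z := by simpa [one_add_one_eq_two] using hz
    exact (contDiff_succ_iff_deriv.1 this).2.2
  have cz := hz.continuous
  have cz1 := hz1.continuous
  have cz2 : Continuous (deriv (deriv z)) := hz1.continuous_deriv le_rfl
  have cχ := hχ.continuous
  have cχ1 : Continuous (deriv χ) := hχ.continuous_deriv le_rfl
  have dz : ∀ x, HasDerivAt z (deriv z x) x := fun x =>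
    (hz.differentiable (by norm_num) x).hasDerivAt
  have dz1 : ∀ x, HasDerivAt (deriv z) (deriv (deriv z) x) x := fun x =>
    (hz1.differentiable (by norm_num) x).hasDerivAt
  have dχ : ∀ x, HasDerivAt χ (deriv χ x) x := fun x =>
    (hχ.differentiable (by norm_num) x).hasDerivAt
  have hP : ∀ x, HasDerivAt (fun x => χ x * inner ℝ (z x) (Complex.I * deriv z x))
      (deriv χ x * inner ℝ (z x) (Complex.I * deriv z x)
        + χ x * inner ℝ (z x) (Complex.I * deriv (deriv z) x)) x := by
    intro x
    have h := (dχ x).mul ((dz x).inner ℝ ((dz1 x).const_mul Complex.I))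
    rw [inner_I_mul_self, add_zero] at h
    exact h
  have h0 := integral_deriv_periodic hP (by fun_prop) (fun x => by
    rw [pχ, pz, deriv_periodic pz])
  rw [integral_add (Continuous.integrableOn_Icc (by fun_prop))
    (Continuous.integrableOn_Icc (by fun_prop))] at h0
  linarith

/-- A bound on the second derivative bounds the symmetric second differences. -/
theorem second_diff_le {g : ℝ → ℂ} (hg : ContDiff ℝ 2 g) {n : ℝ}
    (hn : ∀ x, ‖deriv (deriv g) x‖ ≤ n) (x h : ℝ) :
    ‖g (x + h) - 2 * g x + g (x - h)‖ ≤ n * h ^ 2 := by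
  have hg1 : ContDiff ℝ 1 (deriv g) := by
    have : ContDiff ℝ (1 + 1) g := by simpa [one_add_one_eq_two] using hg
    exact (contDiff_succ_iff_deriv.1 this).2.2
  have dg : ∀ x, HasDerivAt g (deriv g x) x := fun x =>
    (hg.differentiable (by norm_num) x).hasDerivAt
  wlog hh : 0 ≤ h generalizing h
  · have := this (-h) (by linarith)
    rw [sub_neg_eq_add, ← sub_eq_add_neg] at this
    convert this using 1
    · congr 1; ring
    · ring
  have d1 : ∀ a b, ‖deriv g b - deriv g a‖ ≤ n * ‖b - a‖ := fun a b =>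
    convex_univ.norm_image_sub_le_of_norm_deriv_le
      (fun x _ => hg1.differentiable (by norm_num) x) (fun x _ => hn x) (mem_univ a) (mem_univ b)
  have dE : ∀ s, HasDerivAt (fun s => g (x + s) - 2 * g x + g (x - s))
      (deriv g (x + s) - deriv g (x - s)) s := by
    intro s
    have h1 := (dg (x + s)).comp_const_add x s
    have h2 := (dg (x - s)).comp_const_sub x s
    exact ((h1.sub_const (2 * g x)).add h2).congr_deriv (by ring)
  have := image_norm_le_of_norm_deriv_right_le_deriv_boundary (a := 0) (b := h)
    (f := fun s => g (x + s) - 2 * g x + g (x - s)) (f' := fun s => deriv g (x + s) - deriv g (x - s))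
    (B := fun s => n * s ^ 2) (B' := fun s => n * (2 * s))
    (fun s _ => (dE s).continuousAt.continuousWithinAt) (fun s _ => (dE s).hasDerivWithinAt)
    (by simp; ring_nf) (fun s => by simpa using (hasDerivAt_pow 2 s).const_mul n)
    (fun s hs => by
      refine (d1 _ _).trans (le_of_eq ?_)
      rw [show x + s - (x - s) = 2 * s by ring, Real.norm_eq_abs, abs_of_nonneg (by linarith [hs.1])])
  exact this ⟨hh, le_rfl⟩

/-- Conversely, a bound on the symmetric second differences bounds the second derivative. -/
theorem norm_second_deriv_le {g : ℝ → ℂ} (hg : ContDiff ℝ 2 g) {n : ℝ} (x : ℝ)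
    (hn : ∀ h, ‖g (x + h) - 2 * g x + g (x - h)‖ ≤ n * h ^ 2) :
    ‖deriv (deriv g) x‖ ≤ n := by
  have hg1 : ContDiff ℝ 1 (deriv g) := by
    have : ContDiff ℝ (1 + 1) g := by simpa [one_add_one_eq_two] using hg
    exact (contDiff_succ_iff_deriv.1 this).2.2
  have dg : ∀ x, HasDerivAt g (deriv g x) x := fun x =>
    (hg.differentiable (by norm_num) x).hasDerivAt
  have cg2 : Continuous (deriv (deriv g)) := hg1.continuous_deriv le_rfl
  set c := deriv (deriv g) x with hc
  refine le_of_forall_pos_le_add fun ε hε => ?_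
  obtain ⟨δ, hδ, hball⟩ := Metric.continuousAt_iff.1 (cg2.continuousAt (x := x)) ε hε
  -- on the ball `|y - x| < δ` the function `deriv g - c · id` is `ε`-Lipschitz
  have d1 : ∀ a ∈ Metric.ball x δ, ∀ b ∈ Metric.ball x δ,
      ‖(deriv g b - (b:ℂ) * c) - (deriv g a - (a:ℂ) * c)‖ ≤ ε * ‖b - a‖ := by
    intro a ha b hb
    refine (convex_ball x δ).norm_image_sub_le_of_norm_hasDerivWithin_le
      (f := fun y : ℝ => deriv g y - (y:ℂ) * c) (f' := fun y => deriv (deriv g) y - c)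
      (fun y _ => ?_) (fun y hy => ?_) ha hb
    · have h1 := (hg1.differentiable (by norm_num) y).hasDerivAt
      have h2 : HasDerivAt (fun y : ℝ => (y:ℂ) * c) c y := by
        simpa using (Complex.ofRealCLM.hasDerivAt (x := y)).mul_const c
      exact (h1.sub h2).hasDerivWithinAt
    · rw [← dist_eq_norm]; exact (hball hy).le
  have dE : ∀ s : ℝ, HasDerivAt (fun s : ℝ => g (x + s) - 2 * g x + g (x - s) - (s:ℂ) ^ 2 * c)
      (deriv g (x + s) - deriv g (x - s) - 2 * (s:ℂ) * c) s := by
    intro s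
    have h1 := (dg (x + s)).comp_const_add x s
    have h2 := (dg (x - s)).comp_const_sub x s
    have h3 : HasDerivAt (fun s : ℝ => (s:ℂ) ^ 2 * c) (2 * (s:ℂ) * c) s := by
      have := ((Complex.ofRealCLM.hasDerivAt (x := s)).pow 2).mul_const c
      simpa using this
    exact (((h1.sub_const (2 * g x)).add h2).sub h3).congr_deriv (by ring)
  have := image_norm_le_of_norm_deriv_right_le_deriv_boundary (a := 0) (b := δ / 2)
    (f := fun s : ℝ => g (x + s) - 2 * g x + g (x - s) - (s:ℂ) ^ 2 * c)
    (f' := fun s : ℝ => deriv g (x + s) - deriv g (x - s) - 2 * (s:ℂ) * c)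
    (B := fun s => ε * s ^ 2) (B' := fun s => ε * (2 * s))
    (fun s _ => (dE s).continuousAt.continuousWithinAt) (fun s _ => (dE s).hasDerivWithinAt)
    (by simp; ring_nf) (fun s => by simpa using (hasDerivAt_pow 2 s).const_mul ε)
    (fun s hs => by
      have := d1 (x - s) (by simp [abs_of_nonneg hs.1]; linarith [hs.2])
        (x + s) (by simp [abs_of_nonneg hs.1]; linarith [hs.2])
      rw [show x + s - (x - s) = 2 * s by ring, Real.norm_eq_abs,
        abs_of_nonneg (by linarith [hs.1] : 0 ≤ 2 * s)] at this
      refine le_trans (le_of_eq ?_) this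
      congr 1
      push_cast; ring)
  have h1 := this (x := δ / 2) ⟨by positivity, le_rfl⟩
  have h2 := hn (δ / 2)
  have h3 : ‖((δ / 2 : ℝ) : ℂ) ^ 2 * c‖ ≤ n * (δ / 2) ^ 2 + ε * (δ / 2) ^ 2 := by
    have e : ((δ / 2 : ℝ) : ℂ) ^ 2 * c = (g (x + δ / 2) - 2 * g x + g (x - δ / 2))
        - (g (x + δ / 2) - 2 * g x + g (x - δ / 2) - ((δ / 2 : ℝ) : ℂ) ^ 2 * c) := by ring
    rw [e]
    exact (norm_sub_le _ _).trans (add_le_add h2 h1)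
  rw [norm_mul, norm_pow, Complex.norm_real, Real.norm_eq_abs, sq_abs, ← add_mul, mul_comm] at h3
  exact le_of_mul_le_mul_right h3 (by positivity)

/-! ### Differentiating localized energies at right Lipschitz times -/

theorem ContDiff.deriv_of_two {g : ℝ → ℂ} (hg : ContDiff ℝ 2 g) : ContDiff ℝ 1 (deriv g) := by
  have : ContDiff ℝ (1 + 1) g := by simpa [one_add_one_eq_two] using hg
  exact (contDiff_succ_iff_deriv.1 this).2.2

namespace Sol

variable {u V : ℝ → ℝ → ℂ} {L A : ℝ}

theorem cont (h : Sol u V L A) {t : ℝ} (ht : t ∈ Icc (0:ℝ) 1) : Continuous fun x => u x t :=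
  (h.cx t ht).continuous

theorem cont_dx (h : Sol u V L A) {t : ℝ} (ht : t ∈ Icc (0:ℝ) 1) :
    Continuous (deriv fun x => u x t) :=
  (h.cx t ht).deriv_of_two.continuous

theorem cont_dxx (h : Sol u V L A) {t : ℝ} (ht : t ∈ Icc (0:ℝ) 1) :
    Continuous (deriv (deriv fun x => u x t)) :=
  (h.cx t ht).deriv_of_two.continuous_deriv le_rfl

theorem L_nonneg (h : Sol u V L A) : 0 ≤ L := (norm_nonneg _).trans (h.bV 0 0)

theorem norm_dt_le (h : Sol u V L A) {t : ℝ} (ht : t ∈ Icc (0:ℝ) 1) (x : ℝ) :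
    ‖deriv (u x) t‖ ≤ ‖deriv (deriv fun x => u x t) x‖ + L * ‖u x t‖ := by
  have := h.eq x t ht
  change deriv (u x) t = _ at this
  rw [this, norm_mul, Complex.norm_I, one_mul]
  refine (norm_add_le _ _).trans ?_
  rw [norm_mul]
  have := h.bV x t
  gcongr

/-- Sobolev embedding on the circle, uniformly in time. -/
theorem sup_bound (h : Sol u V L A) :
    ∃ M : ℝ, 0 ≤ M ∧ ∀ t ∈ Icc (0:ℝ) 1, ∀ x, ‖u x t‖ ≤ M := by
  refine ⟨(2 * π * (1 + (2 * π + A ^ 2)) + A ^ 2) / (2 * π), by positivity, fun t ht x => ?_⟩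
  have hper : Function.Periodic (fun x => u x t) (2*π) := fun x => h.per x t
  obtain ⟨x', hx', hxx⟩ := hper.exists_mem_Ico₀ (by positivity) x
  change u x t = u x' t at hxx
  rw [hxx]
  have hp := Real.pi_pos
  have c0 := h.cont ht
  have c1 := h.cont_dx ht
  have hA := h.bA t ht
  change ∫ x in Icc (0:ℝ) (2*π), (‖u x t‖ ^ 2 + ‖deriv (fun y => u y t) x‖ ^ 2) ≤ A ^ 2 at hA
  have i0 : IntegrableOn (fun x => ‖u x t‖ ^ 2) (Icc (0:ℝ) (2*π)) :=
    Continuous.integrableOn_Icc (by fun_prop)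
  have i1 : IntegrableOn (fun x => ‖deriv (fun y => u y t) x‖ ^ 2) (Icc (0:ℝ) (2*π)) :=
    Continuous.integrableOn_Icc (by fun_prop)
  rw [integral_add i0 i1] at hA
  have n0 : 0 ≤ ∫ x in Icc (0:ℝ) (2*π), ‖u x t‖ ^ 2 := integral_nonneg fun _ => by positivity
  have n1 : 0 ≤ ∫ x in Icc (0:ℝ) (2*π), ‖deriv (fun y => u y t) x‖ ^ 2 :=
    integral_nonneg fun _ => by positivity
  have osc : ∀ y ∈ Icc (0:ℝ) (2*π), ‖u x' t‖ ≤ ‖u y t‖ ^ 2 + (1 + (2 * π + A ^ 2)) := by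
    intro y hy
    have e : u x' t - u y t = ∫ s in y..x', deriv (fun y => u y t) s :=
      (intervalIntegral.integral_deriv_eq_sub
        (fun s _ => (h.cx t ht).differentiable (by norm_num) s) (c1.intervalIntegrable _ _)).symm
    have b1 : ‖u x' t - u y t‖ ≤ 2 * π + A ^ 2 := by
      rw [e]
      refine (intervalIntegral.norm_integral_le_integral_norm_uIoc).trans ?_
      have hsub : uIoc y x' ⊆ Icc (0:ℝ) (2*π) := by
        intro s hs
        rw [mem_uIoc] at hs
        rcases hs with hs | hs
        · exact ⟨hy.1.trans hs.1.le, hs.2.trans hx'.2.le⟩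
        · exact ⟨hx'.1.trans hs.1.le, hs.2.trans hy.2⟩
      calc ∫ s in uIoc y x', ‖deriv (fun y => u y t) s‖
          ≤ ∫ s in Icc (0:ℝ) (2*π), ‖deriv (fun y => u y t) s‖ :=
            setIntegral_mono_set (Continuous.integrableOn_Icc (by fun_prop))
              (Eventually.of_forall fun _ => norm_nonneg _) hsub.eventuallyLE
        _ ≤ ∫ s in Icc (0:ℝ) (2*π), (1 + ‖deriv (fun y => u y t) s‖ ^ 2) := by
            apply setIntegral_mono (Continuous.integrableOn_Icc (by fun_prop))
              (Continuous.integrableOn_Icc (by fun_prop))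
            intro s
            dsimp only
            nlinarith [sq_nonneg (‖deriv (fun y => u y t) s‖ - 1), norm_nonneg (deriv (fun y => u y t) s)]
        _ = 2 * π + ∫ s in Icc (0:ℝ) (2*π), ‖deriv (fun y => u y t) s‖ ^ 2 := by
            rw [integral_add (Continuous.integrableOn_Icc (by fun_prop)) i1]
            simp [hp.le]
        _ ≤ _ := by linarith
    have b2 : ‖u x' t‖ ≤ ‖u x' t - u y t‖ + ‖u y t‖ := by
      simpa using norm_add_le (u x' t - u y t) (u y t)
    nlinarith [sq_nonneg (‖u y t‖ - 1), norm_nonneg (u y t)]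
  have := setIntegral_mono_on (μ := volume) (s := Icc (0:ℝ) (2*π)) (f := fun _ => ‖u x' t‖)
    (g := fun y => ‖u y t‖ ^ 2 + (1 + (2 * π + A ^ 2)))
    (Continuous.integrableOn_Icc (by fun_prop)) (Continuous.integrableOn_Icc (by fun_prop))
    measurableSet_Icc osc
  rw [integral_add i0 (Continuous.integrableOn_Icc (by fun_prop))] at this
  simp only [setIntegral_const, smul_eq_mul, Real.volume_real_Icc_of_le (by positivity : 0 ≤ 2 * π),
    sub_zero] at this
  rw [le_div_iff₀ (by positivity)]
  linarith

theorem hasDerivAt_t (h : Sol u V L A) (x t : ℝ) : HasDerivAt (u x) (deriv (u x) t) t :=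
  ((h.ct x).differentiable (by norm_num) t).hasDerivAt

theorem measurable_dt (h : Sol u V L A) {t : ℝ} (ht : t ∈ Ico (0:ℝ) 1) :
    Measurable fun x => deriv (u x) t := by
  set e : ℕ → ℝ := fun n => (1 - t) / (n + 1) with he
  have hpos : ∀ n, 0 < e n := fun n => div_pos (by linarith [ht.2]) (by positivity)
  have hle : ∀ n, e n ≤ 1 - t := fun n => div_le_self (by linarith [ht.2]) (by linarith [n.cast_nonneg (α := ℝ)])
  have hlim : Tendsto e atTop (𝓝 0) := by
    have := tendsto_one_div_add_atTop_nhds_zero_nat (𝕜 := ℝ) |>.const_mul (1 - t)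
    simpa [he, div_eq_mul_inv] using this
  refine measurable_of_tendsto_metrizable
    (f := fun n x => (e n)⁻¹ • (u x (t + e n) - u x t)) (fun n => ?_) ?_
  · have h1 := h.cont (t := t + e n) ⟨by linarith [ht.1, hpos n], by linarith [hle n]⟩
    have h2 := h.cont (t := t) ⟨ht.1, ht.2.le⟩
    exact ((h1.sub h2).const_smul (e n)⁻¹).measurable
  · rw [tendsto_pi_nhds]
    intro x
    exact (h.hasDerivAt_t x t).tendsto_slope_zero.comp (tendsto_nhdsWithin_iff.2
      ⟨hlim, Eventually.of_forall fun n => (hpos n).ne'⟩)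

/-- `t ↦ u(·,t) ∈ L²` is Lipschitz at `a`, from the right. -/
def RightLip (u : ℝ → ℝ → ℂ) (a : ℝ) : Prop :=
  ∃ C : ℝ, ∀ᶠ t in 𝓝[>] a,
    ∫ y in Icc (0:ℝ) (2*π), ‖u y t - u y a‖ ^ 2 ≤ C * (t - a) ^ 2

/-- Localized energy estimate at a time where the `L²`-valued curve is right Lipschitz. -/
theorem hasDeriv_energy (h : Sol u V L A) {a : ℝ} (ha : a ∈ Ico (0:ℝ) 1) (hR : RightLip u a)
    {χ : ℝ → ℝ} (hχ : ContDiff ℝ 1 χ) (pχ : ∀ x, χ (x + 2*π) = χ x)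
    {w : ℝ → ℂ} (hw : ContDiff ℝ 2 w) (pw : ∀ x, w (x + 2*π) = w x) :
    ∃ d : ℝ, HasDerivWithinAt (fun t => ∫ y in Icc (0:ℝ) (2*π), χ y * ‖u y t - w y‖ ^ 2) d
        (Ioi a) a ∧
      |d| ≤ 2 * (∫ y in Icc (0:ℝ) (2*π),
          |deriv χ y| * (‖u y a - w y‖ * ‖deriv (fun y => u y a - w y) y‖))
        + 2 * ∫ y in Icc (0:ℝ) (2*π),
          |χ y| * (‖u y a - w y‖ * (‖deriv (deriv w) y‖ + L * ‖u y a‖)) := by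
  have haI : a ∈ Icc (0:ℝ) 1 := ⟨ha.1, ha.2.le⟩
  obtain ⟨M, hM0, hM⟩ := h.sup_bound
  obtain ⟨W, hW0, hW⟩ := exists_bound_of_periodic hw.continuous pw
  obtain ⟨X, hX0, hX⟩ := exists_bound_of_periodic hχ.continuous pχ
  obtain ⟨N, hN0, hN⟩ := exists_bound_of_periodic (h.cont_dxx haI)
    (deriv_periodic (deriv_periodic fun x => h.per x a))
  obtain ⟨C, hC⟩ := hR
  have cχ := hχ.continuous
  have cχ1 : Continuous (deriv χ) := hχ.continuous_deriv le_rfl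
  have cw := hw.continuous
  have cw2 : Continuous (deriv (deriv w)) := hw.deriv_of_two.continuous_deriv le_rfl
  have cu := h.cont haI
  set z : ℝ → ℂ := fun y => u y a - w y with hz
  have hz2 : ContDiff ℝ 2 z := (h.cx a haI).sub hw
  have pz : ∀ x, z (x + 2*π) = z x := fun x => by simp only [hz, h.per, pw]
  have cz := hz2.continuous
  have cz1 := hz2.deriv_of_two.continuous
  have cz2 : Continuous (deriv (deriv z)) := hz2.deriv_of_two.continuous_deriv le_rfl
  have hev : ∀ᶠ t in 𝓝[>] a, t ∈ Ioc a 1 := Ioc_mem_nhdsGT ha.2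
  set q : ℝ → ℝ := fun y => χ y * (2 * inner ℝ (z y) (deriv (u y) a)) with hq
  have hut : ∀ y, ‖deriv (u y) a‖ ≤ N + L * M := fun y =>
    (h.norm_dt_le haI y).trans (add_le_add (hN y)
      (mul_le_mul_of_nonneg_left (hM a haI y) h.L_nonneg))
  have hqm : Measurable q := by
    have h1 := h.measurable_dt ha
    exact cχ.measurable.mul ((cz.measurable.inner h1).const_mul 2)
  have hzb : ∀ y, ‖z y‖ ≤ M + W := fun y =>
    (norm_sub_le _ _).trans (add_le_add (hM a haI y) (hW y))
  have hLM : 0 ≤ N + L * M := add_nonneg hN0 (mul_nonneg h.L_nonneg hM0)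
  have hqb : ∀ y, |q y| ≤ X * (2 * ((M + W) * (N + L * M))) := by
    intro y
    simp only [hq, abs_mul, abs_two]
    have h1 := hX y
    rw [Real.norm_eq_abs] at h1
    have h2 : |inner ℝ (z y) (deriv (u y) a)| ≤ (M + W) * (N + L * M) :=
      (abs_real_inner_le_norm _ _).trans
        (mul_le_mul (hzb y) (hut y) (norm_nonneg _) (by positivity))
    gcongr
  have hqi : IntegrableOn q (Icc (0:ℝ) (2*π)) :=
    Integrable.of_bound hqm.aestronglyMeasurable _ (Eventually.of_forall hqb)
  refine ⟨∫ y in Icc (0:ℝ) (2*π), q y, ?_, ?_⟩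
  · rw [hasDerivWithinAt_iff_tendsto_slope' (by simp)]
    -- difference quotients of the integrand
    set F : ℝ → ℝ → ℝ := fun t y =>
      (t - a)⁻¹ * (χ y * ‖u y t - w y‖ ^ 2 - χ y * ‖u y a - w y‖ ^ 2) with hF
    have hFc : ∀ t ∈ Ioc a 1, Continuous (F t) := by
      intro t ht
      have := h.cont (t := t) ⟨ha.1.trans ht.1.le, ht.2⟩
      simp only [hF]
      fun_prop
    set Y := X * (2 * (M + W)) with hY
    have key : Tendsto (fun t => ∫ y in Icc (0:ℝ) (2*π), F t y) (𝓝[>] a)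
        (𝓝 (∫ y in Icc (0:ℝ) (2*π), q y)) := by
      refine tendsto_integral_of_sq_bound (C := Y ^ 2 * C) ?_ ?_ ?_ hqm.aestronglyMeasurable hqb ?_
      · filter_upwards [hev] with t ht
        exact (hFc t ht).aestronglyMeasurable
      · filter_upwards [hev] with t ht
        exact ((hFc t ht).pow 2).integrableOn_Icc
      · filter_upwards [hev, hC] with t ht hCt
        have htI : t ∈ Icc (0:ℝ) 1 := ⟨ha.1.trans ht.1.le, ht.2⟩
        have cut := h.cont htI
        have hta : 0 < t - a := sub_pos.2 ht.1
        have pt : ∀ y, F t y ^ 2 ≤ Y ^ 2 * ((t - a)⁻¹ ^ 2 * ‖u y t - u y a‖ ^ 2) := by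
          intro y
          have e1 : |‖u y t - w y‖ - ‖u y a - w y‖| ≤ ‖u y t - u y a‖ := by
            refine (abs_norm_sub_norm_le _ _).trans (le_of_eq ?_)
            congr 1; ring
          have e2 : |F t y| ≤ (t - a)⁻¹ * (X * (‖u y t - u y a‖ * (2 * (M + W)))) := by
            have : F t y = (t - a)⁻¹ * (χ y * ((‖u y t - w y‖ - ‖u y a - w y‖)
                * (‖u y t - w y‖ + ‖u y a - w y‖))) := by simp only [hF]; ring
            rw [this, abs_mul, abs_mul, abs_mul, abs_of_pos (inv_pos.2 hta)]
            have h1 := hX y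
            rw [Real.norm_eq_abs] at h1
            have h2 : |‖u y t - w y‖ + ‖u y a - w y‖| ≤ 2 * (M + W) := by
              rw [abs_of_nonneg (by positivity)]
              have := (norm_sub_le (u y t) (w y)).trans (add_le_add (hM t htI y) (hW y))
              have := hzb y
              linarith
            gcongr
          rw [← sq_abs]
          calc |F t y| ^ 2 ≤ ((t - a)⁻¹ * (X * (‖u y t - u y a‖ * (2 * (M + W))))) ^ 2 := by
                gcongr
            _ = _ := by rw [hY]; ring
        calc ∫ y in Icc (0:ℝ) (2*π), F t y ^ 2
            ≤ ∫ y in Icc (0:ℝ) (2*π), Y ^ 2 * ((t - a)⁻¹ ^ 2 * ‖u y t - u y a‖ ^ 2) := by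
              apply setIntegral_mono ((hFc t ht).pow 2).integrableOn_Icc
                (Continuous.integrableOn_Icc (by fun_prop))
              exact pt
          _ = Y ^ 2 * ((t - a)⁻¹ ^ 2 * ∫ y in Icc (0:ℝ) (2*π), ‖u y t - u y a‖ ^ 2) := by
              rw [integral_const_mul, integral_const_mul]
          _ ≤ Y ^ 2 * ((t - a)⁻¹ ^ 2 * (C * (t - a) ^ 2)) := by gcongr
          _ = Y ^ 2 * C := by field_simp
      · intro y
        have hd : HasDerivAt (fun t => χ y * ‖u y t - w y‖ ^ 2) (q y) a :=
          (((h.hasDerivAt_t y a).sub_const (w y)).norm_sq).const_mul (χ y)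
        have := (hasDerivWithinAt_iff_tendsto_slope' (s := Ioi a) (by simp)).1
          hd.hasDerivWithinAt
        refine this.congr fun t => ?_
        simp only [slope, vsub_eq_sub, smul_eq_mul, hF]
    refine key.congr' ?_
    filter_upwards [hev] with t ht
    have cut := h.cont (t := t) ⟨ha.1.trans ht.1.le, ht.2⟩
    simp only [slope, vsub_eq_sub, smul_eq_mul, hF]
    rw [integral_const_mul, integral_sub (Continuous.integrableOn_Icc (by fun_prop))
      (Continuous.integrableOn_Icc (by fun_prop))]
  -- split off the dispersive part and integrate it by parts
  · set p : ℝ → ℝ := fun y => χ y * inner ℝ (z y) (Complex.I * deriv (deriv z) y) with hp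
    have hpi : IntegrableOn p (Icc (0:ℝ) (2*π)) := Continuous.integrableOn_Icc (by fun_prop)
    have e1 : ∫ y in Icc (0:ℝ) (2*π), q y = 2 * (∫ y in Icc (0:ℝ) (2*π), p y)
        + ∫ y in Icc (0:ℝ) (2*π), (q y - 2 * p y) := by
      rw [integral_sub hqi (hpi.const_mul 2), integral_const_mul]; ring
    have e2 : |∫ y in Icc (0:ℝ) (2*π), p y| ≤ ∫ y in Icc (0:ℝ) (2*π),
        |deriv χ y| * (‖z y‖ * ‖deriv z y‖) := by
      rw [hp, integral_inner_second_deriv hz2 hχ pz pχ, abs_neg, ← Real.norm_eq_abs]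
      refine norm_integral_le_of_norm_le (Continuous.integrableOn_Icc (by fun_prop))
        (Eventually.of_forall fun y => ?_)
      rw [norm_mul, Real.norm_eq_abs, Real.norm_eq_abs]
      gcongr
      refine (abs_real_inner_le_norm _ _).trans ?_
      simp
    have e3 : |∫ y in Icc (0:ℝ) (2*π), (q y - 2 * p y)| ≤ ∫ y in Icc (0:ℝ) (2*π),
        2 * (|χ y| * (‖z y‖ * (‖deriv (deriv w) y‖ + L * ‖u y a‖))) := by
      rw [← Real.norm_eq_abs]
      refine norm_integral_le_of_norm_le (Continuous.integrableOn_Icc (by fun_prop))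
        (Eventually.of_forall fun y => ?_)
      have hzz : deriv (deriv z) y = deriv (deriv fun x => u x a) y - deriv (deriv w) y := by
        have d1 : deriv z = fun y => deriv (fun x => u x a) y - deriv w y := by
          ext y
          exact deriv_sub ((h.cx a haI).differentiable (by norm_num) y)
            (hw.differentiable (by norm_num) y)
        rw [d1]
        exact deriv_sub ((h.cx a haI).deriv_of_two.differentiable (by norm_num) y)
            (hw.deriv_of_two.differentiable (by norm_num) y)
      have heq : deriv (u y) a = Complex.I * (deriv (deriv fun x => u x a) y + V y a * u y a) :=
        h.eq y a haI
      have : q y - 2 * p y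
          = 2 * (χ y * inner ℝ (z y) (Complex.I * (deriv (deriv w) y + V y a * u y a))) := by
        simp only [hq, hp]
        rw [hzz, heq]
        have : Complex.I * (deriv (deriv fun x => u x a) y + V y a * u y a)
          = Complex.I * (deriv (deriv fun x => u x a) y - deriv (deriv w) y)
            + Complex.I * (deriv (deriv w) y + V y a * u y a) := by ring
        rw [this, inner_add_right]
        ring
      rw [this, norm_mul, norm_mul, Real.norm_eq_abs, Real.norm_eq_abs, Real.norm_eq_abs, abs_two]
      gcongr
      refine (abs_real_inner_le_norm _ _).trans ?_
      rw [norm_mul, Complex.norm_I, one_mul]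
      gcongr
      refine (norm_add_le _ _).trans ?_
      rw [norm_mul]
      have := h.bV y a
      gcongr
    rw [integral_const_mul] at e3
    rw [e1]
    refine (abs_add_le _ _).trans ?_
    rw [abs_mul, abs_two]
    linarith

end Sol

/-! ### Local bounds on the speed in `L²` -/

namespace Sol
variable {u V : ℝ → ℝ → ℂ} {L A : ℝ}

theorem continuousOn_energy (h : Sol u V L A) {S : Set ℝ} (hS : IsCompact S)
    {χ : ℝ → ℝ} (hχ : Continuous χ) {w : ℝ → ℂ} (hw : Continuous w) :
    ContinuousOn (fun t => ∫ y in S, χ y * ‖u y t - w y‖ ^ 2) (Icc (0:ℝ) 1) := by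
  obtain ⟨M, hM0, hM⟩ := h.sup_bound
  refine continuousOn_of_dominated (bound := fun y => |χ y| * (M + ‖w y‖) ^ 2) ?_ ?_ ?_ ?_
  · intro t ht
    have := h.cont ht
    exact Continuous.aestronglyMeasurable (by fun_prop)
  · intro t ht
    refine Eventually.of_forall fun y => ?_
    rw [norm_mul, norm_pow, norm_norm, Real.norm_eq_abs]
    have : ‖u y t - w y‖ ≤ M + ‖w y‖ := (norm_sub_le _ _).trans (by linarith [hM t ht y])
    gcongr
  · have hc : Continuous fun y => |χ y| * (M + ‖w y‖) ^ 2 := by fun_prop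
    exact hc.continuousOn.integrableOn_compact hS
  · refine Eventually.of_forall fun y => ?_
    have := (h.ct y).continuous
    exact Continuous.continuousOn (by fun_prop)

/-- Starting from a time `a` with `|∂ₓₓu(·,a)| ≤ n`, the curve moves at `L²`-speed at most
`(n + L M) √(2π)` as long as it is right Lipschitz. The energy estimate is applied to
`u(·,t) - u(·,a)`, for which the dispersive part only sees `∂ₓₓu(·,a)`. -/
theorem nrm_sub_le_of_rightLip (h : Sol u V L A) {M n a b : ℝ}
    (hM0 : 0 ≤ M) (hM : ∀ t ∈ Icc (0:ℝ) 1, ∀ x, ‖u x t‖ ≤ M) (hn0 : 0 ≤ n)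
    (ha : 0 ≤ a) (hb : b ≤ 1) (hn : ∀ y, ‖deriv (deriv fun x => u x a) y‖ ≤ n)
    (hR : ∀ t ∈ Ioo a b, RightLip u t) {t : ℝ} (ht : t ∈ Icc a b) :
    nrm (Icc 0 (2*π)) (fun y => u y t - u y a) ≤ (n + L * M) * √(2*π) * (t - a) := by
  have hab : a ≤ b := ht.1.trans ht.2
  have haI : a ∈ Icc (0:ℝ) 1 := ⟨ha, hab.trans hb⟩
  have hL := h.L_nonneg
  set K := (n + L * M) * √(2*π) with hK
  set D : ℝ → ℝ := fun t => ∫ y in Icc (0:ℝ) (2*π), 1 * ‖u y t - u y a‖ ^ 2 with hD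
  have hDn : ∀ t, D t = nrm (Icc 0 (2*π)) (fun y => u y t - u y a) ^ 2 := by
    intro t; rw [nrm_sq]; simp [hD]
  have hD0 : ∀ t, 0 ≤ D t := fun t => by rw [hDn]; positivity
  have cu := h.cont haI
  have hDc : ContinuousOn D (Icc a b) :=
    (h.continuousOn_energy isCompact_Icc continuous_const cu).mono
      (Icc_subset_Icc ha hb)
  have hder : ∀ t ∈ Ioo a b, ∃ d, HasDerivWithinAt D d (Ioi t) t ∧ d ≤ 2 * K * √(D t) := by
    intro t ht
    have htI : t ∈ Icc (0:ℝ) 1 := ⟨ha.trans ht.1.le, ht.2.le.trans hb⟩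
    obtain ⟨d, hd, hdb⟩ := h.hasDeriv_energy (a := t) ⟨ha.trans ht.1.le, ht.2.trans_le hb⟩ (hR t ht)
      (χ := fun _ => 1) contDiff_const (fun _ => rfl) (h.cx a haI) (fun x => h.per x a)
    refine ⟨d, hd, (le_abs_self d).trans (hdb.trans ?_)⟩
    have cut := h.cont htI
    have c2 := h.cont_dxx haI
    simp only [deriv_const', abs_zero, zero_mul, integral_zero, mul_zero, zero_add, abs_one,
      one_mul]
    have s1 : ∫ y in Icc (0:ℝ) (2*π), ‖u y t - u y a‖ * (‖deriv (deriv fun x => u x a) y‖ + L * ‖u y t‖)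
        ≤ ∫ y in Icc (0:ℝ) (2*π), ‖u y t - u y a‖ * 1 * (n + L * M) := by
      apply setIntegral_mono (Continuous.integrableOn_Icc (by fun_prop))
        (Continuous.integrableOn_Icc (by fun_prop))
      intro y
      have h1 := hn y
      have h2 := hM t htI y
      dsimp only
      rw [mul_one]
      gcongr
    rw [integral_mul_const] at s1
    have cs := sq_integral_mul_le (S := Icc (0:ℝ) (2*π)) isCompact_Icc
      (a := fun y => ‖u y t - u y a‖) (b := fun _ => 1) (by fun_prop) continuous_const
    rw [← nrm_sq (Icc (0:ℝ) (2*π)) (fun y => u y t - u y a), ← hDn] at cs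
    have s2 : ∫ y in Icc (0:ℝ) (2*π), ‖u y t - u y a‖ * 1 ≤ √(D t) * √(2*π) := by
      rw [← Real.sqrt_mul (hD0 t)]
      refine Real.le_sqrt_of_sq_le (cs.trans (le_of_eq ?_))
      simp [Real.pi_pos.le]
    have : 0 ≤ n + L * M := by positivity
    calc _ ≤ 2 * ((√(D t) * √(2*π)) * (n + L * M)) := by
          refine mul_le_mul_of_nonneg_left (s1.trans ?_) (by norm_num)
          gcongr
      _ = _ := by rw [hK]; ring
  choose! d hd hdb using hder
  have hK0 : 0 ≤ K := by positivity
  rw [← Real.sqrt_sq (nrm_nonneg (Icc 0 (2*π)) (fun y => u y t - u y a)), ← hDn]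
  refine le_of_forall_pos_le_add fun ε hε => ?_
  -- regularize the square root, which is not differentiable at `0`
  have main := intervalIntegral.sub_le_integral_of_hasDeriv_right_of_le (a := a) (b := t)
    (g := fun t => √(D t + ε ^ 2)) (g' := fun t => d t / (2 * √(D t + ε ^ 2))) (φ := fun _ => K)
    ht.1 ((hDc.mono (Icc_subset_Icc_right ht.2)).add continuousOn_const).sqrt
    (fun x hx => by
      have := (hd x ⟨hx.1, hx.2.trans_le ht.2⟩).add_const (ε ^ 2)
      exact this.sqrt (by have := hD0 x; positivity))
    (continuous_const.integrableOn_Icc)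
    (fun x hx => by
      have h1 := hdb x ⟨hx.1, hx.2.trans_le ht.2⟩
      have h0 := hD0 x
      have h2 : √(D x) ≤ √(D x + ε ^ 2) := Real.sqrt_le_sqrt (by nlinarith)
      have h3 : 0 < √(D x + ε ^ 2) := Real.sqrt_pos.2 (by positivity)
      rw [div_le_iff₀ (by positivity)]
      nlinarith)
  have e0 : D a = 0 := by simp [hD]
  simp only [intervalIntegral.integral_const, smul_eq_mul, e0, zero_add, Real.sqrt_sq hε.le] at main
  have : √(D t) ≤ √(D t + ε ^ 2) := Real.sqrt_le_sqrt (by nlinarith)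
  linarith

theorem nrm_mono_set {S S' : Set ℝ} (hS : S ⊆ S') (hc : IsCompact S') {f : ℝ → ℂ}
    (hf : Continuous f) : nrm S f ≤ nrm S' f :=
  Real.sqrt_le_sqrt (setIntegral_mono_set
    ((hf.norm.pow 2).continuousOn.integrableOn_compact hc)
    (Eventually.of_forall fun _ => by positivity) hS.eventuallyLE)

/-- The points `x` at which `u(x,·)` is `m`-Lipschitz on `[0,1]`. -/
def lipSet (u : ℝ → ℝ → ℂ) (m : ℕ) : Set ℝ :=
  {x | ∀ s ∈ Icc (0:ℝ) 1, ∀ t ∈ Icc (0:ℝ) 1, ‖u x t - u x s‖ ≤ m * |t - s|}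

theorem isClosed_lipSet (h : Sol u V L A) (m : ℕ) : IsClosed (lipSet u m) := by
  simp only [lipSet, Set.ofPred_forall]
  refine isClosed_iInter fun s => isClosed_iInter fun hs => isClosed_iInter fun t =>
    isClosed_iInter fun ht => ?_
  exact isClosed_le ((h.cont ht).sub (h.cont hs)).norm continuous_const

theorem monotone_lipSet : Monotone (lipSet u) := by
  intro m m' hm x hx s hs t ht
  refine (hx s hs t ht).trans ?_
  gcongr

theorem iUnion_lipSet (h : Sol u V L A) : ⋃ m, lipSet u m = univ := by
  refine eq_univ_iff_forall.2 fun x => mem_iUnion.2 ?_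
  have hc : Continuous (deriv (u x)) := (h.ct x).continuous_deriv le_rfl
  obtain ⟨C, hC⟩ := (isCompact_Icc (a := (0:ℝ)) (b := 1)).exists_bound_of_continuousOn
    hc.continuousOn
  obtain ⟨m, hm⟩ := exists_nat_ge C
  refine ⟨m, fun s hs t ht => ?_⟩
  exact (convex_Icc (0:ℝ) 1).norm_image_sub_le_of_norm_deriv_le
    (fun y _ => (h.hasDerivAt_t x y).differentiableAt) (fun y hy => (hC y hy).trans hm) hs ht

/-- Restricted to `lipSet u m`, difference quotients in time are dominated, so the `L²`-speed at
time `c` is controlled by the pointwise bound on `∂ₜu(·,c)`. -/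
theorem eventually_nrm_sub_le (h : Sol u V L A) {M n c : ℝ}
    (hM0 : 0 ≤ M) (hM : ∀ t ∈ Icc (0:ℝ) 1, ∀ x, ‖u x t‖ ≤ M) (hn0 : 0 ≤ n)
    (hc : c ∈ Ico (0:ℝ) 1) (hn : ∀ y, ‖deriv (deriv fun x => u x c) y‖ ≤ n) (m : ℕ) :
    ∀ᶠ t in 𝓝[>] c, nrm (Icc 0 (2*π) ∩ lipSet u m) (fun y => u y t - u y c)
      ≤ ((n + L * M) * √(2*π) + 1) * (t - c) := by
  have hcI : c ∈ Icc (0:ℝ) 1 := ⟨hc.1, hc.2.le⟩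
  have hL := h.L_nonneg
  set S := Icc (0:ℝ) (2*π) ∩ lipSet u m with hSd
  have hS : IsCompact S := isCompact_Icc.inter_right (h.isClosed_lipSet m)
  have hfin : IsFiniteMeasure (volume.restrict S) := ⟨by
    rw [Measure.restrict_apply_univ]; exact hS.measure_lt_top⟩
  set K := (n + L * M) * √(2*π) with hK
  have hK0 : 0 ≤ K := by positivity
  have hev : ∀ᶠ t in 𝓝[>] c, t ∈ Ioc c 1 := Ioc_mem_nhdsGT hc.2
  have lim : Tendsto (fun t => ∫ y in S, ‖(t - c)⁻¹ • (u y t - u y c)‖ ^ 2) (𝓝[>] c)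
      (𝓝 (∫ y in S, ‖deriv (u y) c‖ ^ 2)) := by
    refine tendsto_integral_filter_of_dominated_convergence (fun _ => (m:ℝ) ^ 2) ?_ ?_
      (integrable_const _) ?_
    · filter_upwards [hev] with t ht
      have h1 := h.cont hcI
      have h2 := h.cont (t := t) ⟨hc.1.trans ht.1.le, ht.2⟩
      exact Continuous.aestronglyMeasurable (by fun_prop)
    · filter_upwards [hev] with t ht
      refine (ae_restrict_iff' hS.measurableSet).2 (Eventually.of_forall fun y hy => ?_)
      have h1 := hy.2 c hcI t ⟨hc.1.trans ht.1.le, ht.2⟩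
      have h2 : 0 < t - c := sub_pos.2 ht.1
      rw [abs_of_pos h2] at h1
      rw [norm_pow, norm_norm, norm_smul, norm_inv, Real.norm_eq_abs, abs_of_pos h2]
      refine pow_le_pow_left₀ (by positivity) ?_ 2
      rw [inv_mul_le_iff₀ h2]
      linarith
    · refine Eventually.of_forall fun y => ?_
      have := (hasDerivWithinAt_iff_tendsto_slope' (s := Ioi c) (by simp)).1
        (h.hasDerivAt_t y c).hasDerivWithinAt
      exact (this.norm.pow 2)
  have bd : ∫ y in S, ‖deriv (u y) c‖ ^ 2 < (K + 1) ^ 2 := by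
    have h1 : ‖∫ y in S, ‖deriv (u y) c‖ ^ 2‖ ≤ (n + L * M) ^ 2 * volume.real S := by
      refine norm_setIntegral_le_of_norm_le_const hS.measure_lt_top fun y _ => ?_
      rw [norm_pow, norm_norm]
      refine pow_le_pow_left₀ (norm_nonneg _) ?_ 2
      refine (h.norm_dt_le hcI y).trans ?_
      have h1 := hn y
      have h2 := hM c hcI y
      gcongr
    have h2 : volume.real S ≤ 2 * π := by
      have : volume.real S ≤ volume.real (Icc (0:ℝ) (2*π)) :=
        measureReal_mono inter_subset_left isCompact_Icc.measure_lt_top.ne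
      simpa [Real.pi_pos.le] using this
    have h3 : (n + L * M) ^ 2 * volume.real S ≤ K ^ 2 := by
      rw [hK, mul_pow, Real.sq_sqrt (by positivity)]
      gcongr
    have := (le_abs_self _).trans h1
    nlinarith
  filter_upwards [hev, lim.eventually_lt_const bd] with t ht hlt
  have h2 : 0 < t - c := sub_pos.2 ht.1
  refine Real.sqrt_le_iff.2 ⟨by positivity, ?_⟩
  have : ∀ y, ‖(t - c)⁻¹ • (u y t - u y c)‖ ^ 2 = (t - c)⁻¹ ^ 2 * ‖u y t - u y c‖ ^ 2 := by
    intro y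
    rw [norm_smul, norm_inv, Real.norm_eq_abs, abs_of_pos h2, mul_pow]
  simp only [this] at hlt
  rw [integral_const_mul, inv_pow, inv_mul_lt_iff₀ (by positivity)] at hlt
  rw [mul_pow]
  linarith
end Sol

/-! ### All times are right Lipschitz -/

namespace Sol
variable {u V : ℝ → ℝ → ℂ} {L A : ℝ}

/-- If `∂ₓₓu` is bounded by `n` at the times of a closed set `G` and all other times are right
Lipschitz, then the curve starting at a time of `G` is Lipschitz. The inequality is propagated
in time: across points of `G` by `eventually_nrm_sub_le`, across the gaps of `G` by
`nrm_sub_le_of_rightLip` started at the left end of the gap. -/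
theorem nrm_sub_le_of_closed (h : Sol u V L A) {M n t0 t1 : ℝ}
    (hM0 : 0 ≤ M) (hM : ∀ t ∈ Icc (0:ℝ) 1, ∀ x, ‖u x t‖ ≤ M) (hn0 : 0 ≤ n)
    (h0 : 0 ≤ t0) (h1 : t1 ≤ 1) {G : Set ℝ} (hG : IsClosed G) (h0G : t0 ∈ G)
    (hn : ∀ t ∈ G ∩ Icc t0 t1, ∀ y, ‖deriv (deriv fun x => u x t) y‖ ≤ n)
    (hR : ∀ t ∈ Ico t0 t1 \ G, RightLip u t) {t : ℝ} (ht : t ∈ Icc t0 t1) :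
    nrm (Icc 0 (2*π)) (fun y => u y t - u y t0) ≤ ((n + L * M) * √(2*π) + 1) * (t - t0) := by
  have hL := h.L_nonneg
  have hI : ∀ t ∈ Icc t0 t1, t ∈ Icc (0:ℝ) 1 := fun t ht => ⟨h0.trans ht.1, ht.2.trans h1⟩
  have h01 : t0 ≤ t1 := ht.1.trans ht.2
  have t0I : t0 ∈ Icc t0 t1 := ⟨le_rfl, h01⟩
  have cu : ∀ t ∈ Icc t0 t1, Continuous fun y => u y t := fun t ht => h.cont (hI t ht)
  set K := (n + L * M) * √(2*π) with hK
  have hK0 : 0 ≤ K := by positivity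
  have main : ∀ m : ℕ, ∀ t ∈ Icc t0 t1,
      nrm (Icc 0 (2*π) ∩ lipSet u m) (fun y => u y t - u y t0) ≤ (K + 1) * (t - t0) := by
    intro m
    set S := Icc (0:ℝ) (2*π) ∩ lipSet u m with hSd
    have hS : IsCompact S := isCompact_Icc.inter_right (h.isClosed_lipSet m)
    set H : ℝ → ℝ := fun t => nrm S (fun y => u y t - u y t0) with hH
    have Hc : ContinuousOn H (Icc t0 t1) := by
      have := (h.continuousOn_energy hS (χ := fun _ => 1) continuous_const (cu t0 t0I)).mono hI
      simpa [hH, nrm] using this.sqrt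
    -- the triangle inequality through an intermediate time
    have tri : ∀ a ∈ Icc t0 t1, ∀ t ∈ Icc t0 t1, H t ≤ H a + nrm S (fun y => u y t - u y a) := by
      intro a ha t ht
      have c0 := cu t0 t0I
      have c1 := cu a ha
      have c2 := cu t ht
      have := nrm_add_le hS (f := fun y => u y a - u y t0) (g := fun y => u y t - u y a)
        (by fun_prop) (by fun_prop)
      simpa [hH] using this
    by_contra hcon
    set F := {t | t ∈ Icc t0 t1 ∧ (K + 1) * (t - t0) < H t} with hF
    have hFne : F.Nonempty := by
      push Not at hcon
      obtain ⟨t, ht, hlt⟩ := hcon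
      exact ⟨t, ht, hlt⟩
    have hFb : BddBelow F := ⟨t0, fun t ht => ht.1.1⟩
    set c := sInf F with hc
    have hc0 : t0 ≤ c := le_csInf hFne fun t ht => ht.1.1
    have hc1 : c ≤ t1 := by
      obtain ⟨t, ht⟩ := hFne
      exact (csInf_le hFb ht).trans ht.1.2
    have below : ∀ t ∈ Ico t0 c, H t ≤ (K + 1) * (t - t0) := by
      intro t ht
      by_contra hlt
      exact absurd (csInf_le hFb (show t ∈ F from ⟨⟨ht.1, ht.2.le.trans hc1⟩, not_le.1 hlt⟩))
        (not_le.2 ht.2)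
    have Pt0 : H t0 ≤ (K + 1) * (t0 - t0) := by simp [hH, nrm]
    have Pc : H c ≤ (K + 1) * (c - t0) := by
      rcases hc0.eq_or_lt with he | hlt
      · rw [← he]; exact Pt0
      · have e1 : Tendsto H (𝓝[Ico t0 c] c) (𝓝 (H c)) :=
          (Hc c ⟨hc0, hc1⟩).mono fun t ht => ⟨ht.1, ht.2.le.trans hc1⟩
        have e2 : Tendsto (fun t => (K + 1) * (t - t0)) (𝓝[Ico t0 c] c)
            (𝓝 ((K + 1) * (c - t0))) :=
          (Continuous.tendsto (by fun_prop) c).mono_left nhdsWithin_le_nhds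
        have : (𝓝[Ico t0 c] c).NeBot := by
          rw [← mem_closure_iff_nhdsWithin_neBot, closure_Ico hlt.ne]
          exact ⟨hc0, le_rfl⟩
        exact le_of_tendsto_of_tendsto e1 e2
          (eventually_nhdsWithin_of_forall fun t ht => below t ht)
    have hc1' : c < t1 := by
      rcases hc1.eq_or_lt with he | hlt
      · exfalso
        obtain ⟨t, ht⟩ := hFne
        have := csInf_le hFb ht
        have e : t = c := le_antisymm (he ▸ ht.1.2) this
        exact absurd Pc (not_le.2 (e ▸ ht.2))
      · exact hlt
    -- it suffices that the inequality persists to the right of `c`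
    suffices hs : ∀ᶠ t in 𝓝[>] c, H t ≤ (K + 1) * (t - t0) by
      obtain ⟨d, hd, hdd⟩ := mem_nhdsGT_iff_exists_Ioo_subset.1 hs
      have : d ≤ c := by
        refine le_csInf hFne fun t ht => ?_
        by_contra hlt
        push Not at hlt
        have ht0 : c ≤ t := csInf_le hFb ht
        rcases ht0.eq_or_lt with he | hlt'
        · exact absurd Pc (not_le.2 (he ▸ ht.2))
        · exact absurd (hdd ⟨hlt', hlt⟩) (not_le.2 ht.2)
      exact absurd hd (not_lt.2 this)
    by_cases hcG : c ∈ G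
    · filter_upwards [h.eventually_nrm_sub_le hM0 hM hn0 ⟨h0.trans hc0, hc1'.trans_le h1⟩
        (hn c ⟨hcG, hc0, hc1⟩) m, Ioc_mem_nhdsGT hc1'] with t ht ht'
      have := tri c ⟨hc0, hc1⟩ t ⟨hc0.trans ht'.1.le, ht'.2⟩
      linarith
    · have hcl : IsCompact (G ∩ Icc t0 c) := isCompact_Icc.inter_left hG
      obtain ⟨a, ha⟩ := hcl.exists_isGreatest ⟨t0, h0G, le_rfl, hc0⟩
      have hac : a < c := lt_of_le_of_ne ha.1.2.2 fun e => hcG (e ▸ ha.1.1)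
      have haI : a ∈ Icc t0 t1 := ⟨ha.1.2.1, ha.1.2.2.trans hc1⟩
      obtain ⟨δ, hδ, hball⟩ := Metric.isOpen_iff.1 hG.isOpen_compl c hcG
      have hb : c < min (c + δ) t1 := lt_min (by linarith) hc1'
      filter_upwards [Ioo_mem_nhdsGT hb] with t ht
      have hgap : ∀ s ∈ Ioo a (min (c + δ) t1), RightLip u s := by
        intro s hs
        refine hR s ⟨⟨haI.1.trans hs.1.le, hs.2.trans_le (min_le_right _ _)⟩, fun hsG => ?_⟩
        rcases le_or_gt s c with hsc | hsc
        · exact absurd (ha.2 ⟨hsG, haI.1.trans hs.1.le, hsc⟩) (not_le.2 hs.1)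
        · refine hball ?_ hsG
          rw [Metric.mem_ball, Real.dist_eq, abs_of_pos (sub_pos.2 hsc)]
          have := hs.2.trans_le (min_le_left _ _)
          linarith
      have htI : t ∈ Icc t0 t1 := ⟨hc0.trans ht.1.le, (ht.2.trans_le (min_le_right _ _)).le⟩
      have e1 := h.nrm_sub_le_of_rightLip hM0 hM hn0 (h0.trans haI.1)
        ((min_le_right (c + δ) t1).trans h1) (hn a ⟨ha.1.1, haI⟩) hgap
        (t := t) ⟨hac.le.trans ht.1.le, ht.2.le⟩
      have c1 := cu a haI
      have c2 := cu t htI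
      have e2 : nrm S (fun y => u y t - u y a) ≤ nrm (Icc 0 (2*π)) (fun y => u y t - u y a) :=
        nrm_mono_set inter_subset_left isCompact_Icc (by fun_prop)
      have e3 := tri a haI t htI
      have e4 := below a ⟨haI.1, hac⟩
      have : 0 ≤ t - a := by linarith [ht.1]
      rw [← hK] at e1
      linarith
  have c0 := cu t0 t0I
  have c1 := cu t ht
  have lim : Tendsto (fun m : ℕ => nrm (Icc 0 (2*π) ∩ lipSet u m) (fun y => u y t - u y t0))
      atTop (𝓝 (nrm (Icc 0 (2*π)) (fun y => u y t - u y t0))) := by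
    have e : ⋃ m : ℕ, (Icc (0:ℝ) (2*π) ∩ lipSet u m) = Icc 0 (2*π) := by
      rw [← inter_iUnion, h.iUnion_lipSet, inter_univ]
    have := tendsto_setIntegral_of_monotone (μ := volume)
      (f := fun y => ‖u y t - u y t0‖ ^ 2) (s := fun m : ℕ => Icc (0:ℝ) (2*π) ∩ lipSet u m)
      (fun m => measurableSet_Icc.inter (h.isClosed_lipSet m).measurableSet)
      (fun m m' hm => inter_subset_inter_right _ (monotone_lipSet hm))
      (by rw [e]; exact Continuous.integrableOn_Icc (by fun_prop))
    rw [e] at this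
    exact (Real.continuous_sqrt.tendsto _).comp this
  exact le_of_tendsto' lim fun m => main m t ht

/-- Times at which `∂ₓₓu` is bounded by `n`, expressed through second differences so that the set
is visibly closed. -/
def bddSet (u : ℝ → ℝ → ℂ) (n : ℕ) : Set ℝ :=
  {t | t ∈ Icc (0:ℝ) 1 ∧ ∀ x k : ℝ, ‖u (x + k) t - 2 * u x t + u (x - k) t‖ ≤ n * k ^ 2}

theorem isClosed_bddSet (h : Sol u V L A) (n : ℕ) : IsClosed (bddSet u n) := by
  have c : ∀ x, Continuous (u x) := fun x => (h.ct x).continuous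
  refine isClosed_Icc.inter (s₂ := {t | ∀ x k : ℝ,
    ‖u (x + k) t - 2 * u x t + u (x - k) t‖ ≤ n * k ^ 2}) ?_
  simp only [Set.ofPred_forall]
  refine isClosed_iInter fun x => isClosed_iInter fun k => isClosed_le ?_ continuous_const
  have h1 := c x
  have h2 := c (x + k)
  have h3 := c (x - k)
  fun_prop

theorem exists_mem_bddSet (h : Sol u V L A) {t : ℝ} (ht : t ∈ Icc (0:ℝ) 1) :
    ∃ n : ℕ, t ∈ bddSet u n := by
  obtain ⟨N, hN0, hN⟩ := exists_bound_of_periodic (h.cont_dxx ht)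
    (deriv_periodic (deriv_periodic fun x => h.per x t))
  obtain ⟨n, hn⟩ := exists_nat_ge N
  exact ⟨n, ht, fun x k => second_diff_le (h.cx t ht) (fun x => (hN x).trans hn) x k⟩

/-- Every time is right Lipschitz. Otherwise, by Baire's theorem on the closure `G` of the bad
times, `∂ₓₓu` is uniformly bounded on a nonempty relatively open part of `G`, and
`nrm_sub_le_of_closed` shows that the bad times there are not bad. -/
theorem rightLip (h : Sol u V L A) : ∀ a ∈ Ico (0:ℝ) 1, RightLip u a := by
  by_contra hcon
  push Not at hcon
  obtain ⟨a₀, ha₀, hbad₀⟩ := hcon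
  obtain ⟨M, hM0, hM⟩ := h.sup_bound
  set NL := {a | a ∈ Ico (0:ℝ) 1 ∧ ¬ RightLip u a} with hNL
  set G := closure NL with hGd
  have hG : IsClosed G := isClosed_closure
  have hGI : G ⊆ Icc 0 1 := closure_minimal (fun a ha => ⟨ha.1.1, ha.1.2.le⟩) isClosed_Icc
  have : Nonempty G := ⟨⟨a₀, subset_closure ⟨ha₀, hbad₀⟩⟩⟩
  have : CompleteSpace G := hG.completeSpace_coe
  obtain ⟨n, g, hg⟩ := nonempty_interior_of_iUnion_of_closed
    (f := fun n : ℕ => ((↑) : G → ℝ) ⁻¹' bddSet u n)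
    (fun n => (h.isClosed_bddSet n).preimage continuous_subtype_val)
    (eq_univ_iff_forall.2 fun g => mem_iUnion.2 (h.exists_mem_bddSet (hGI g.2)))
  obtain ⟨ε, hε, hball⟩ := Metric.isOpen_iff.1 isOpen_interior g hg
  have hB : ∀ t ∈ G, dist t g < ε → t ∈ bddSet u n := fun t ht hd => by
    have := interior_subset (hball (show (⟨t, ht⟩ : G) ∈ Metric.ball g ε from hd))
    exact this
  obtain ⟨t0, ht0, hd0⟩ := Metric.mem_closure_iff.1 g.2 ε hε
  rw [dist_comm] at hd0
  -- a right neighbourhood of `t0` inside the ball around `g`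
  set r := ε - dist t0 g with hr
  have hr0 : 0 < r := sub_pos.2 hd0
  set t1 := min 1 (t0 + r / 2) with ht1
  have h01 : t0 < t1 := lt_min ht0.1.2 (by linarith)
  refine ht0.2 ⟨((n + L * M) * √(2*π) + 1) ^ 2, ?_⟩
  filter_upwards [Ioc_mem_nhdsGT h01] with t ht
  have key := h.nrm_sub_le_of_closed (n := n) hM0 hM n.cast_nonneg ht0.1.1
    (min_le_left 1 (t0 + r / 2)) hG (subset_closure ht0)
    (fun s hs y => by
      have hs2 : s ≤ t0 + r / 2 := hs.2.2.trans (min_le_right _ _)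
      have hd : dist s g < ε := by
        refine (dist_triangle s t0 g).trans_lt ?_
        rw [Real.dist_eq, abs_of_nonneg (sub_nonneg.2 hs.2.1)]
        linarith
      exact norm_second_deriv_le (h.cx s (hGI hs.1)) y fun k => (hB s hs.1 hd).2 y k)
    (fun s hs => by
      by_contra hb
      exact hs.2 (subset_closure ⟨⟨ht0.1.1.trans hs.1.1,
        hs.1.2.trans_le (min_le_left _ _)⟩, hb⟩))
    (t := t) ⟨ht.1.le, ht.2⟩
  rw [← nrm_sq, ← mul_pow]
  exact pow_le_pow_left₀ (nrm_nonneg _ _) key 2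

end Sol

/-! ### The spatial cutoff -/

theorem hasDerivAt_max_sq (v : ℝ) : HasDerivAt (fun v : ℝ => max 0 v ^ 2) (2 * max 0 v) v := by
  rcases lt_trichotomy v 0 with hv | rfl | hv
  · rw [max_eq_left hv.le, mul_zero]
    refine (hasDerivAt_const v (0:ℝ)).congr_of_eventuallyEq ?_
    filter_upwards [Iio_mem_nhds hv] with w hw
    rw [max_eq_left (le_of_lt hw)]; norm_num
  · rw [max_self, mul_zero]
    rw [hasDerivAt_iff_isLittleO]
    simp only [max_self, ne_eq, OfNat.ofNat_ne_zero, not_false_eq_true, zero_pow, sub_zero,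
      smul_zero]
    refine (Asymptotics.IsBigO.of_bound 1 (Eventually.of_forall fun w => ?_)).trans_isLittleO
      (Asymptotics.isLittleO_pow_id (𝕜 := ℝ) (n := 2) (by norm_num))
    rw [one_mul, norm_pow, norm_pow]
    refine pow_le_pow_left₀ (norm_nonneg _) ?_ 2
    rw [Real.norm_eq_abs, Real.norm_eq_abs, abs_of_nonneg (le_max_left _ _)]
    exact max_le (abs_nonneg _) (le_abs_self _)
  · rw [max_eq_right hv.le]
    have := hasDerivAt_pow 2 v
    refine HasDerivAt.congr_of_eventuallyEq (f := fun v => v ^ 2) (by simpa using this) ?_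
    filter_upwards [Ioi_mem_nhds hv] with w hw
    rw [max_eq_right (le_of_lt hw)]

/-- The base of the cutoff; `(1 - cos y) / 2 = sin² (y / 2)`. -/
def bumpBase (t y : ℝ) : ℝ := max 0 (1 - (1 - cos y) / (128 * t))

/-- A `C¹`, `2π`-periodic cutoff to the `8π√t`-neighbourhood of `2πℤ`. -/
def bump (t y : ℝ) : ℝ := bumpBase t y ^ 2

/-- The derivative of `bump t`. -/
def bumpDeriv (t y : ℝ) : ℝ := 2 * bumpBase t y * (-(sin y / (128 * t)))

theorem bumpBase_nonneg (t y : ℝ) : 0 ≤ bumpBase t y := le_max_left _ _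

theorem bumpBase_le_one {t : ℝ} (ht : 0 < t) (y : ℝ) : bumpBase t y ≤ 1 := by
  refine max_le zero_le_one ?_
  have : 0 ≤ (1 - cos y) / (128 * t) := div_nonneg (by linarith [cos_le_one y]) (by positivity)
  linarith

theorem hasDerivAt_bump (t y : ℝ) : HasDerivAt (bump t) (bumpDeriv t y) y := by
  have h1 : HasDerivAt (fun y => 1 - (1 - cos y) / (128 * t)) (-(sin y / (128 * t))) y := by
    have := (((hasDerivAt_cos y).const_sub 1).div_const (128 * t)).const_sub 1
    simpa using this
  exact (hasDerivAt_max_sq _).comp y h1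

theorem deriv_bump (t : ℝ) : deriv (bump t) = bumpDeriv t :=
  funext fun y => (hasDerivAt_bump t y).deriv

theorem continuous_bumpBase (t : ℝ) : Continuous (bumpBase t) := by
  unfold bumpBase
  fun_prop

theorem continuous_bumpDeriv (t : ℝ) : Continuous (bumpDeriv t) := by
  have := continuous_bumpBase t
  unfold bumpDeriv
  fun_prop

theorem continuous_bump (t : ℝ) : Continuous (bump t) := (continuous_bumpBase t).pow 2

theorem contDiff_bump (t : ℝ) : ContDiff ℝ 1 (bump t) := by
  rw [contDiff_one_iff_deriv, deriv_bump]
  exact ⟨fun y => (hasDerivAt_bump t y).differentiableAt, continuous_bumpDeriv t⟩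

theorem bumpBase_periodic (t : ℝ) : Function.Periodic (bumpBase t) (2*π) := fun y => by
  simp [bumpBase]

theorem bump_periodic (t : ℝ) : Function.Periodic (bump t) (2*π) := fun y => by
  simp only [bump, bumpBase_periodic t y]

theorem bumpDeriv_periodic (t : ℝ) : Function.Periodic (bumpDeriv t) (2*π) := fun y => by
  simp only [bumpDeriv, bumpBase_periodic t y, sin_add_two_pi]

theorem bump_nonneg (t y : ℝ) : 0 ≤ bump t y := sq_nonneg _

theorem bump_le_one {t : ℝ} (ht : 0 < t) (y : ℝ) : bump t y ≤ 1 :=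
  pow_le_one₀ (bumpBase_nonneg t y) (bumpBase_le_one ht y)

theorem one_sub_cos_lt {t y : ℝ} (ht : 0 < t) (h : bumpBase t y ≠ 0) : 1 - cos y < 128 * t := by
  by_contra hcon
  push Not at hcon
  refine h (max_eq_left ?_)
  have : 1 ≤ (1 - cos y) / (128 * t) := (one_le_div (by positivity)).2 hcon
  linarith

theorem abs_lt_of_bumpBase {t y : ℝ} (ht : 0 < t) (hy : |y| ≤ π) (h : bumpBase t y ≠ 0) :
    |y| < 8 * π * √t := by
  have h1 := one_sub_cos_lt ht h
  have h2 : cos y ≤ 1 - 2 / π ^ 2 * y ^ 2 := cos_le_one_sub_mul_cos_sq hy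
  refine abs_lt_of_sq_lt_sq ?_ (by positivity)
  rw [mul_pow, Real.sq_sqrt ht.le]
  have hp := Real.pi_pos
  have h3 : 2 / π ^ 2 * y ^ 2 < 128 * t := by linarith
  rw [div_mul_eq_mul_div, div_lt_iff₀ (by positivity)] at h3
  nlinarith

/-- The cutoff is supported in the `8π√t`-neighbourhood of `2πℤ`. -/
theorem exists_int_of_bump {t y : ℝ} (ht : 0 < t) (h : bump t y ≠ 0) :
    ∃ k : ℤ, |y - 2*π*(k:ℝ)| < 8 * π * √t := by
  refine ⟨round (y / (2*π)), abs_lt_of_bumpBase ht ?_ ?_⟩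
  · have h1 := abs_sub_round (y / (2*π))
    have hp := Real.pi_pos
    have : y - 2*π*(round (y / (2*π)) : ℝ) = (y / (2*π) - round (y / (2*π))) * (2*π) := by
      field_simp
    rw [this, abs_mul, abs_of_pos (by positivity : 0 < 2*π)]
    nlinarith
  · have := (bumpBase_periodic t).sub_int_mul_eq (x := y) (round (y / (2*π)))
    rw [mul_comm (2*π), this]
    exact fun h0 => h (by simp [bump, h0])

theorem abs_bumpDeriv_le {t : ℝ} (ht : 0 < t) (y : ℝ) : |bumpDeriv t y| ≤ 1 / (4 * √t) := by
  have hs : 0 < √t := Real.sqrt_pos.2 ht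
  by_cases h : bumpBase t y = 0
  · simp only [bumpDeriv, h]
    simp
  have h1 := one_sub_cos_lt ht h
  have h2 : |sin y| ≤ 16 * √t := by
    refine abs_le_of_sq_le_sq ?_ (by positivity)
    rw [mul_pow, Real.sq_sqrt ht.le, sin_sq]
    nlinarith [cos_le_one y, neg_one_le_cos y]
  rw [bumpDeriv, abs_mul, abs_mul, abs_two, abs_of_nonneg (bumpBase_nonneg t y), abs_neg, abs_div,
    abs_of_pos (by positivity : 0 < 128 * t)]
  calc 2 * bumpBase t y * (|sin y| / (128 * t)) ≤ 2 * 1 * (16 * √t / (128 * t)) := by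
        have := bumpBase_le_one ht y
        gcongr
    _ = 1 / (4 * √t) := by
        have : √t ^ 2 = t := Real.sq_sqrt ht.le
        field_simp
        linarith

/-- The weight that dominates the flux in the localized energy estimate for `bump t`. -/
def flux (L t y : ℝ) : ℝ := |bumpDeriv t y| + 2 * L * bump t y

theorem continuous_flux (L t : ℝ) : Continuous (flux L t) := by
  have h1 := continuous_bumpDeriv t
  have h2 := continuous_bump t
  unfold flux
  fun_prop

theorem flux_periodic (L t : ℝ) : Function.Periodic (flux L t) (2*π) := fun y => by
  simp only [flux, bump_periodic t y, bumpDeriv_periodic t y]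

theorem flux_nonneg {L : ℝ} (hL : 0 ≤ L) (t y : ℝ) : 0 ≤ flux L t y := by
  have := bump_nonneg t y
  unfold flux
  positivity

theorem le_integral_bump {t : ℝ} (ht : 0 < t) (ht' : 8 * √t ≤ π) :
    9 * √t ≤ ∫ y in (-π)..π, bump t y := by
  have hs : 0 < √t := Real.sqrt_pos.2 ht
  have hlow : ∀ y ∈ Icc (-(8 * √t)) (8 * √t), (9/16 : ℝ) ≤ bump t y := by
    intro y hy
    have h1 : y ^ 2 ≤ 64 * t := by
      have := sq_le_sq' hy.1 hy.2
      rw [mul_pow, Real.sq_sqrt ht.le] at this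
      linarith
    have h2 := one_sub_sq_div_two_le_cos (x := y)
    have h3 : (1 - cos y) / (128 * t) ≤ 1 / 4 := by
      rw [div_le_iff₀ (by positivity)]; linarith
    have h4 : 3 / 4 ≤ bumpBase t y := le_max_of_le_right (by linarith)
    unfold bump
    nlinarith
  calc 9 * √t = ∫ y in (-(8 * √t))..(8 * √t), (9/16 : ℝ) := by
        rw [intervalIntegral.integral_const, smul_eq_mul]; ring
    _ ≤ ∫ y in (-(8 * √t))..(8 * √t), bump t y :=
        intervalIntegral.integral_mono_on (by linarith) (by simp)
          ((continuous_bump t).intervalIntegrable _ _) hlow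
    _ ≤ ∫ y in (-π)..π, bump t y :=
        intervalIntegral.integral_mono_interval (by linarith) (by linarith) ht'
          (Eventually.of_forall fun y => bump_nonneg t y) ((continuous_bump t).intervalIntegrable _ _)

theorem integral_flux_le {L t : ℝ} (ht : 0 < t) (ht' : 8 * √t ≤ 1)
    (hLt : L * √t ≤ 1) : ∫ y in (-π)..π, flux L t y ≤ 36 * π := by
  have hs : 0 < √t := Real.sqrt_pos.2 ht
  have hp := Real.pi_pos
  have hle : 8 * π * √t ≤ π := by nlinarith
  set r := 8 * π * √t with hr
  have hr0 : 0 < r := by positivity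
  have hvan : ∀ y ∈ Icc (-π) π, y ∉ Ioo (-r) r → flux L t y = 0 := by
    intro y hy hyr
    have : bumpBase t y = 0 := by
      by_contra h0
      exact hyr (abs_lt.1 (abs_lt_of_bumpBase ht (abs_le.2 hy) h0))
    simp [flux, bumpDeriv, bump, this]
  have hup : ∀ y, flux L t y ≤ 9 / (4 * √t) := by
    intro y
    have h1 := abs_bumpDeriv_le ht y
    have h2 := bump_le_one ht y
    have h3 := bump_nonneg t y
    have h4 : L ≤ 1 / √t := (le_div_iff₀ hs).2 hLt
    have h5 : 2 * L * bump t y ≤ 2 * (1 / √t) * 1 := by gcongr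
    have h6 : 9 / (4 * √t) = 1 / (4 * √t) + 2 * (1 / √t) * 1 := by field_simp; norm_num
    unfold flux
    linarith
  have e : ∫ y in (-π)..π, flux L t y = ∫ y in (-r)..r, flux L t y := by
    have hi : ∀ a b, IntervalIntegrable (flux L t) volume a b :=
      fun a b => (continuous_flux L t).intervalIntegrable a b
    rw [← intervalIntegral.integral_add_adjacent_intervals (hi (-π) (-r)) (hi (-r) π),
      ← intervalIntegral.integral_add_adjacent_intervals (hi (-r) r) (hi r π)]
    have z1 : ∫ y in (-π)..(-r), flux L t y = 0 := by
      rw [intervalIntegral.integral_congr (g := fun _ => 0)]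
      · simp
      · intro y hy
        rw [uIcc_of_le (by linarith)] at hy
        exact hvan y ⟨hy.1, by linarith [hy.2]⟩ fun h => absurd h.1 (not_lt.2 hy.2)
    have z2 : ∫ y in r..π, flux L t y = 0 := by
      rw [intervalIntegral.integral_congr (g := fun _ => 0)]
      · simp
      · intro y hy
        rw [uIcc_of_le hle] at hy
        exact hvan y ⟨by linarith [hy.1], hy.2⟩ fun h => absurd h.2 (not_lt.2 hy.1)
    rw [z1, z2]; ring
  rw [e]
  calc ∫ y in (-r)..r, flux L t y ≤ ∫ y in (-r)..r, 9 / (4 * √t) :=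
        intervalIntegral.integral_mono_on (by linarith)
          ((continuous_flux L t).intervalIntegrable _ _) (by simp) fun y _ => hup y
    _ = 36 * π := by
        rw [intervalIntegral.integral_const, smul_eq_mul, hr]; field_simp; norm_num

/-! ### Averaging over a translation -/

/-- Averaging a periodic weight over one period of translations decouples it from `Γ`. -/
theorem integral_translate {k Γ : ℝ → ℝ} (hk : Continuous k) (pk : Function.Periodic k (2*π))
    {t : ℝ} (ht : 0 < t) (hΓ : IntegrableOn Γ (Icc 0 (2*π))) :
    IntegrableOn (fun s => ∫ y in Icc 0 (2*π), k (y + 2*π*(s/t)) * Γ y) (Icc t (2*t)) ∧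
    ∫ s in Icc t (2*t), ∫ y in Icc 0 (2*π), k (y + 2*π*(s/t)) * Γ y
      = (t / (2*π)) * (∫ y in (-π)..π, k y) * ∫ y in Icc 0 (2*π), Γ y := by
  have hp := Real.pi_pos
  obtain ⟨M, hM0, hM⟩ := exists_bound_of_periodic hk pk
  have hint : Integrable (Function.uncurry fun s y => k (y + 2*π*(s/t)) * Γ y)
      ((volume.restrict (Icc t (2*t))).prod (volume.restrict (Icc 0 (2*π)))) := by
    refine Integrable.bdd_mul (f := fun p : ℝ × ℝ => k (p.2 + 2*π*(p.1/t))) (c := M)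
      (Integrable.comp_snd hΓ (volume.restrict (Icc t (2*t)))) ?_
      (Eventually.of_forall fun p => hM _)
    exact Continuous.aestronglyMeasurable (by fun_prop)
  refine ⟨hint.integral_prod_left, ?_⟩
  rw [integral_integral_swap hint]
  have inner : ∀ y, ∫ s in Icc t (2*t), k (y + 2*π*(s/t)) * Γ y
      = (t / (2*π)) * (∫ y in (-π)..π, k y) * Γ y := by
    intro y
    rw [integral_mul_const, integral_Icc_eq_integral_Ioc,
      ← intervalIntegral.integral_of_le (by linarith)]
    congr 1
    have e : ∀ s, k (y + 2*π*(s/t)) = k (y + (2*π/t) * s) := fun s => by congr 2; ring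
    simp only [e]
    rw [intervalIntegral.integral_comp_add_mul k (by positivity), smul_eq_mul, inv_div]
    congr 1
    have e1 : y + 2*π/t * t = y + 2*π := by field_simp
    have e2 : y + 2*π/t * (2*t) = y + 2*π + 2*π := by field_simp; ring
    rw [e1, e2, pk.intervalIntegral_add_eq _ (-π)]
    congr 1; ring
  simp only [inner]
  rw [integral_const_mul]

/-! ### Joint measurability -/

/-- Clamping of time to `[0,1]`, where the solution is known to be regular. -/
def clamp (s : ℝ) : ℝ := max 0 (min s 1)

theorem clamp_mem (s : ℝ) : clamp s ∈ Icc (0:ℝ) 1 :=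
  ⟨le_max_left _ _, max_le zero_le_one (min_le_right _ _)⟩

theorem clamp_of_mem {s : ℝ} (hs : s ∈ Icc (0:ℝ) 1) : clamp s = s := by
  rw [clamp, min_eq_left hs.2, max_eq_right hs.1]

theorem continuous_clamp : Continuous clamp := by unfold clamp; fun_prop

/-- The `H¹` energy density, with time clamped to `[0,1]`. -/
def density (u : ℝ → ℝ → ℂ) (y s : ℝ) : ℝ :=
  ‖u y (clamp s)‖ ^ 2 + ‖deriv (fun z => u z (clamp s)) y‖ ^ 2

namespace Sol
variable {u V : ℝ → ℝ → ℂ} {L A : ℝ}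

theorem measurable_clamp (h : Sol u V L A) :
    Measurable fun p : ℝ × ℝ => u p.1 (clamp p.2) :=
  measurable_uncurry_of_continuous_of_measurable (u := fun y s => u y (clamp s))
    (fun s => h.cont (clamp_mem s))
    (fun y => ((h.ct y).continuous.comp continuous_clamp).measurable)

theorem measurable_deriv_clamp (h : Sol u V L A) :
    Measurable fun p : ℝ × ℝ => deriv (fun z => u z (clamp p.2)) p.1 := by
  set e : ℕ → ℝ := fun n => 1 / ((n:ℝ) + 1) with he
  have hpos : ∀ n, 0 < e n := fun n => by positivity
  refine measurable_of_tendsto_metrizable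
    (f := fun n p => (e n)⁻¹ • (u (p.1 + e n) (clamp p.2) - u p.1 (clamp p.2))) (fun n => ?_) ?_
  · have h1 := h.measurable_clamp
    have h2 : Measurable fun p : ℝ × ℝ => u (p.1 + e n) (clamp p.2) :=
      h1.comp (g := fun p : ℝ × ℝ => u p.1 (clamp p.2)) (f := fun p : ℝ × ℝ => (p.1 + e n, p.2))
        ((measurable_fst.add_const _).prodMk measurable_snd)
    exact (h2.sub h1).const_smul (e n)⁻¹
  · rw [tendsto_pi_nhds]
    intro p
    have hd : HasDerivAt (fun z => u z (clamp p.2)) (deriv (fun z => u z (clamp p.2)) p.1) p.1 :=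
      ((h.cx _ (clamp_mem p.2)).differentiable (by norm_num) p.1).hasDerivAt
    exact hd.tendsto_slope_zero.comp (tendsto_nhdsWithin_iff.2
      ⟨tendsto_one_div_add_atTop_nhds_zero_nat, Eventually.of_forall fun n => (hpos n).ne'⟩)

theorem measurable_density (h : Sol u V L A) :
    Measurable (Function.uncurry (density u)) :=
  (h.measurable_clamp.norm.pow_const 2).add (h.measurable_deriv_clamp.norm.pow_const 2)

theorem density_nonneg (y s : ℝ) : 0 ≤ density u y s := by unfold density; positivity

theorem continuous_density (h : Sol u V L A) (s : ℝ) : Continuous fun y => density u y s := by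
  have h1 := h.cont (clamp_mem s)
  have h2 := h.cont_dx (clamp_mem s)
  unfold density
  fun_prop

theorem integral_density_le (h : Sol u V L A) (s : ℝ) :
    ∫ y in Icc (0:ℝ) (2*π), density u y s ≤ A ^ 2 := h.bA _ (clamp_mem s)

theorem integrable_density (h : Sol u V L A) (T : ℝ) :
    Integrable (Function.uncurry (density u))
      ((volume.restrict (Icc 0 (2*π))).prod (volume.restrict (Icc 0 T))) := by
  rw [integrable_prod_iff' h.measurable_density.aestronglyMeasurable]
  refine ⟨Eventually.of_forall fun s => (h.continuous_density s).integrableOn_Icc, ?_⟩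
  have hm : StronglyMeasurable fun s => ∫ y in Icc (0:ℝ) (2*π), ‖density u y s‖ :=
    StronglyMeasurable.integral_prod_left (f := fun y s => ‖density u y s‖)
      h.measurable_density.norm.stronglyMeasurable
  refine Integrable.of_bound hm.aestronglyMeasurable (A ^ 2) (Eventually.of_forall fun s => ?_)
  rw [norm_of_nonneg (integral_nonneg fun _ => norm_nonneg _)]
  simp only [Function.uncurry_apply_pair, Real.norm_eq_abs, abs_of_nonneg (density_nonneg _ _)]
  exact h.integral_density_le s

/-! ### The localized energy inequality -/

/-- The mass seen by a cutoff at time `0` is at most the mass it sees at time `s` plus the flux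
accumulated up to a later time `T`. -/
theorem energy_le (h : Sol u V L A) {χ : ℝ → ℝ} (hχ : ContDiff ℝ 1 χ)
    (pχ : ∀ x, χ (x + 2*π) = χ x) (hχ0 : ∀ x, 0 ≤ χ x) {s T : ℝ} (hs : s ∈ Icc (0:ℝ) 1)
    (hsT : s ≤ T) :
    ∫ y in Icc (0:ℝ) (2*π), χ y * ‖u y 0‖ ^ 2 ≤ (∫ y in Icc (0:ℝ) (2*π), χ y * ‖u y s‖ ^ 2)
      + ∫ y in Icc (0:ℝ) (2*π), (|deriv χ y| + 2 * L * χ y) * ∫ σ in Icc 0 T, density u y σ := by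
  have hL := h.L_nonneg
  set κ : ℝ → ℝ := fun y => |deriv χ y| + 2 * L * χ y with hκ
  have cχ := hχ.continuous
  have cχ1 : Continuous (deriv χ) := hχ.continuous_deriv le_rfl
  have cκ : Continuous κ := by simp only [hκ]; fun_prop
  have pκ : ∀ x, κ (x + 2*π) = κ x := fun x => by
    simp only [hκ, pχ, deriv_periodic pχ]
  have κ0 : ∀ y, 0 ≤ κ y := fun y => by
    have := hχ0 y
    simp only [hκ]; positivity
  obtain ⟨M, hM0, hM⟩ := exists_bound_of_periodic cκ pκ
  have hint : Integrable (Function.uncurry fun y σ => κ y * density u y σ)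
      ((volume.restrict (Icc 0 (2*π))).prod (volume.restrict (Icc 0 T))) :=
    Integrable.bdd_mul (f := fun p : ℝ × ℝ => κ p.1) (c := M) (h.integrable_density T)
      (Continuous.aestronglyMeasurable (by fun_prop)) (Eventually.of_forall fun p => hM _)
  set φ : ℝ → ℝ := fun σ => ∫ y in Icc (0:ℝ) (2*π), κ y * density u y σ with hφ
  have φ0 : ∀ σ, 0 ≤ φ σ := fun σ =>
    integral_nonneg fun y => mul_nonneg (κ0 y) (density_nonneg y σ)
  have hφi : IntegrableOn φ (Icc 0 T) := hint.integral_prod_right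
  have swap : ∫ y in Icc (0:ℝ) (2*π), κ y * ∫ σ in Icc 0 T, density u y σ
      = ∫ σ in Icc 0 T, φ σ := by
    rw [hφ, ← integral_integral_swap hint]
    simp only [integral_const_mul]
  rw [swap]
  set D : ℝ → ℝ := fun σ => ∫ y in Icc (0:ℝ) (2*π), χ y * ‖u y σ - 0‖ ^ 2 with hD
  have hder : ∀ σ ∈ Ioo 0 s, ∃ d, HasDerivWithinAt D d (Ioi σ) σ ∧ -d ≤ φ σ := by
    intro σ hσ
    have hσ1 : σ ∈ Ico (0:ℝ) 1 := ⟨hσ.1.le, hσ.2.trans_le hs.2⟩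
    have hσI : σ ∈ Icc (0:ℝ) 1 := ⟨hσ1.1, hσ1.2.le⟩
    obtain ⟨d, hd, hdb⟩ := h.hasDeriv_energy hσ1 (h.rightLip σ hσ1) hχ pχ (w := fun _ => 0)
      contDiff_const (fun _ => rfl)
    refine ⟨d, hd, (neg_le_abs d).trans (hdb.trans ?_)⟩
    have c0 := h.cont hσI
    have c1 := h.cont_dx hσI
    simp only [sub_zero, deriv_const', norm_zero, zero_add]
    rw [← integral_const_mul, ← integral_const_mul, ← integral_add
      (Continuous.integrableOn_Icc (by fun_prop)) (Continuous.integrableOn_Icc (by fun_prop))]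
    refine setIntegral_mono (Continuous.integrableOn_Icc (by fun_prop))
      (cκ.mul (h.continuous_density σ)).integrableOn_Icc fun y => ?_
    simp only [hκ, density, clamp_of_mem hσI]
    rw [abs_of_nonneg (hχ0 y)]
    have x0 := hχ0 y
    have a1 : 2 * (‖u y σ‖ * ‖deriv (fun y => u y σ) y‖)
        ≤ ‖u y σ‖ ^ 2 + ‖deriv (fun y => u y σ) y‖ ^ 2 := by
      nlinarith [sq_nonneg (‖u y σ‖ - ‖deriv (fun y => u y σ) y‖)]
    have a2 : |deriv χ y| * (2 * (‖u y σ‖ * ‖deriv (fun y => u y σ) y‖))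
        ≤ |deriv χ y| * (‖u y σ‖ ^ 2 + ‖deriv (fun y => u y σ) y‖ ^ 2) := by gcongr
    have a3 : 0 ≤ 2 * L * χ y * ‖deriv (fun y => u y σ) y‖ ^ 2 := by positivity
    linear_combination a2 + a3
  choose! d hd hdb using hder
  have hDc : ContinuousOn D (Icc 0 s) :=
    (h.continuousOn_energy isCompact_Icc cχ (w := fun _ => 0) continuous_const).mono
      (Icc_subset_Icc_right hs.2)
  have main := intervalIntegral.sub_le_integral_of_hasDeriv_right_of_le (a := 0) (b := s)
    (g := fun σ => - D σ) (g' := fun σ => - d σ) (φ := φ) hs.1 hDc.neg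
    (fun σ hσ => (hd σ hσ).neg) (hφi.mono_set (Icc_subset_Icc_right hsT)) hdb
  rw [intervalIntegral.integral_of_le hs.1, ← integral_Icc_eq_integral_Ioc] at main
  have mono : ∫ σ in Icc 0 s, φ σ ≤ ∫ σ in Icc 0 T, φ σ :=
    setIntegral_mono_set hφi (Eventually.of_forall φ0) (Icc_subset_Icc_right hsT).eventuallyLE
  simp only [hD, sub_zero] at main
  linarith

end Sol

/-! ### Mass in the moving tubes -/

/-- The translates by `2πℤ` of the two moving tubes of radius `8π√t`. -/
def tube (t s : ℝ) : Set ℝ :=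
  {y : ℝ | (∃ k : ℤ, |y + 2*π*(s/t) - 2*π*(k:ℝ)| < 8*π*Real.sqrt t) ∨
    (∃ k : ℤ, |y - 2*π*(s/t) - 2*π*(k:ℝ)| < 8*π*Real.sqrt t)}

theorem isOpen_tube (t : ℝ) : IsOpen {p : ℝ × ℝ | p.1 ∈ tube t p.2} := by
  have : {p : ℝ × ℝ | p.1 ∈ tube t p.2} =
      (⋃ k : ℤ, {p : ℝ × ℝ | |p.1 + 2*π*(p.2/t) - 2*π*(k:ℝ)| < 8*π*Real.sqrt t}) ∪
      ⋃ k : ℤ, {p : ℝ × ℝ | |p.1 - 2*π*(p.2/t) - 2*π*(k:ℝ)| < 8*π*Real.sqrt t} := by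
    ext p; simp [tube]
  rw [this]
  exact (isOpen_iUnion fun k => isOpen_lt (by fun_prop) continuous_const).union
    (isOpen_iUnion fun k => isOpen_lt (by fun_prop) continuous_const)

theorem measurableSet_tube (t s : ℝ) : MeasurableSet (tube t s) :=
  ((isOpen_tube t).preimage (f := fun y : ℝ => (y, s)) (by fun_prop)).measurableSet

namespace Sol
variable {u V : ℝ → ℝ → ℂ} {L A : ℝ}

/-- The mass of the solution in the tubes at time `s`, as it occurs in the main estimate. -/
def tubeMass (u : ℝ → ℝ → ℂ) (t s : ℝ) : ℝ :=
  ∫ y in Icc (0:ℝ) (2*π) ∩ tube t s, (‖u y s‖ ^ 2 + s * ‖deriv (fun z => u z s) y‖ ^ 2)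

theorem tubeMass_nonneg {t s : ℝ} (hs : 0 ≤ s) : 0 ≤ tubeMass u t s :=
  integral_nonneg fun y => by positivity

theorem integrableOn_tubeMass (h : Sol u V L A) (t : ℝ) :
    IntegrableOn (tubeMass u t) (Icc 0 1) := by
  set F : ℝ → ℝ → ℝ := fun y s => {p : ℝ × ℝ | p.1 ∈ tube t p.2}.indicator
    (fun p => ‖u p.1 (clamp p.2)‖ ^ 2
      + p.2 * ‖deriv (fun z => u z (clamp p.2)) p.1‖ ^ 2) (y, s) with hF
  have hFm : StronglyMeasurable (Function.uncurry F) :=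
    (((h.measurable_clamp.norm.pow_const 2).add (measurable_snd.mul
      (h.measurable_deriv_clamp.norm.pow_const 2))).indicator
        (isOpen_tube t).measurableSet).stronglyMeasurable
  have hm : StronglyMeasurable fun s => ∫ y in Icc (0:ℝ) (2*π), F y s :=
    StronglyMeasurable.integral_prod_left hFm
  have heq : ∀ s ∈ Icc (0:ℝ) 1, ∫ y in Icc (0:ℝ) (2*π), F y s = tubeMass u t s := by
    intro s hs
    have : (fun y => F y s) = (tube t s).indicator
        (fun y => ‖u y s‖ ^ 2 + s * ‖deriv (fun z => u z s) y‖ ^ 2) := by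
      ext y
      simp only [hF, indicator, clamp_of_mem hs]
      rfl
    rw [this, setIntegral_indicator (measurableSet_tube t s)]
    rfl
  refine Integrable.of_bound (C := A ^ 2) ?_ ?_
  · exact (hm.aestronglyMeasurable (μ := volume.restrict (Icc 0 1))).congr
      ((ae_restrict_iff' measurableSet_Icc).2 (Eventually.of_forall heq))
  · refine (ae_restrict_iff' measurableSet_Icc).2 (Eventually.of_forall fun s hs => ?_)
    have c0 := h.cont hs
    have c1 := h.cont_dx hs
    rw [norm_of_nonneg (tubeMass_nonneg hs.1)]
    calc tubeMass u t s
        ≤ ∫ y in Icc (0:ℝ) (2*π), (‖u y s‖ ^ 2 + s * ‖deriv (fun z => u z s) y‖ ^ 2) := by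
          refine setIntegral_mono_set (Continuous.integrableOn_Icc (by fun_prop))
            (Eventually.of_forall fun y => ?_) inter_subset_left.eventuallyLE
          have := hs.1
          simp only [Pi.zero_apply]
          positivity
      _ ≤ ∫ y in Icc (0:ℝ) (2*π), (‖u y s‖ ^ 2 + ‖deriv (fun z => u z s) y‖ ^ 2) := by
          refine setIntegral_mono (Continuous.integrableOn_Icc (by fun_prop))
            (Continuous.integrableOn_Icc (by fun_prop)) fun y => ?_
          have : s * ‖deriv (fun z => u z s) y‖ ^ 2 ≤ ‖deriv (fun z => u z s) y‖ ^ 2 :=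
            mul_le_of_le_one_left (by positivity) hs.2
          dsimp only
          linarith
      _ ≤ A ^ 2 := h.bA s hs

theorem integral_bump_le_tubeMass (h : Sol u V L A) {t s : ℝ} (ht : 0 < t)
    (hs : s ∈ Icc (0:ℝ) 1) :
    ∫ y in Icc (0:ℝ) (2*π), bump t (y + 2*π*(s/t)) * ‖u y s‖ ^ 2 ≤ tubeMass u t s := by
  have c0 := h.cont hs
  have c1 := h.cont_dx hs
  have cb := continuous_bump t
  have hi : IntegrableOn (fun y => ‖u y s‖ ^ 2 + s * ‖deriv (fun z => u z s) y‖ ^ 2)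
      (Icc (0:ℝ) (2*π)) := Continuous.integrableOn_Icc (by fun_prop)
  rw [tubeMass, ← setIntegral_indicator (measurableSet_tube t s)]
  refine setIntegral_mono (Continuous.integrableOn_Icc (by fun_prop))
    (hi.indicator (measurableSet_tube t s)) fun y => ?_
  have hs0 := hs.1
  by_cases hy : y ∈ tube t s
  · rw [indicator_of_mem hy]
    have := mul_le_of_le_one_left (by positivity : 0 ≤ ‖u y s‖ ^ 2)
      (bump_le_one ht (y + 2*π*(s/t)))
    have : 0 ≤ s * ‖deriv (fun z => u z s) y‖ ^ 2 := by positivity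
    linarith
  · rw [indicator_of_notMem hy]
    have : bump t (y + 2*π*(s/t)) = 0 := by
      by_contra h0
      exact hy (Or.inl (exists_int_of_bump ht h0))
    rw [this, zero_mul]

/-- The energy inequality for the cutoff centred on the line `y = -2πs/t`, averaged over
`s ∈ [t, 2t]`; as `s` varies, the cutoff sweeps the circle exactly once. -/
theorem averaged_energy (h : Sol u V L A) {t c₀ : ℝ} (ht : 0 < t) (ht2 : 2 * t ≤ 1)
    (hc : ∫ x in Icc (0:ℝ) (2*π), ‖u x 0‖ ^ 2 = c₀ ^ 2) :
    (t / (2*π)) * (∫ y in (-π)..π, bump t y) * c₀ ^ 2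
      ≤ (∫ s in Icc t (2*t), tubeMass u t s)
        + (t / (2*π)) * (∫ y in (-π)..π, flux L t y) * (2 * t * A ^ 2) := by
  have hp := Real.pi_pos
  have hL := h.L_nonneg
  have c0 := h.cont (t := 0) (by simp)
  set Γ : ℝ → ℝ := fun y => ∫ σ in Icc 0 (2*t), density u y σ with hΓd
  have hΓ : IntegrableOn Γ (Icc 0 (2*π)) := (h.integrable_density (2*t)).integral_prod_left
  have hΓle : ∫ y in Icc 0 (2*π), Γ y ≤ 2 * t * A ^ 2 := by
    rw [hΓd, integral_integral_swap (h.integrable_density (2*t))]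
    calc ∫ σ in Icc 0 (2*t), ∫ y in Icc 0 (2*π), density u y σ
        ≤ ∫ σ in Icc 0 (2*t), A ^ 2 := by
          refine setIntegral_mono (h.integrable_density (2*t)).integral_prod_right
            (continuous_const.integrableOn_Icc) fun σ => h.integral_density_le σ
      _ = 2 * t * A ^ 2 := by simp [ht.le]
  obtain ⟨i1, e1⟩ := integral_translate (continuous_bump t) (bump_periodic t) ht
    (Γ := fun y => ‖u y 0‖ ^ 2) (Continuous.integrableOn_Icc (by fun_prop))
  obtain ⟨i2, e2⟩ := integral_translate (continuous_flux L t) (flux_periodic L t) ht hΓ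
  have iJ : IntegrableOn (tubeMass u t) (Icc t (2*t)) :=
    (h.integrableOn_tubeMass t).mono_set (Icc_subset_Icc ht.le ht2)
  have key : ∀ s ∈ Icc t (2*t), ∫ y in Icc 0 (2*π), bump t (y + 2*π*(s/t)) * ‖u y 0‖ ^ 2
      ≤ tubeMass u t s + ∫ y in Icc 0 (2*π), flux L t (y + 2*π*(s/t)) * Γ y := by
    intro s hs
    have hsI : s ∈ Icc (0:ℝ) 1 := ⟨ht.le.trans hs.1, hs.2.trans ht2⟩
    have := h.energy_le (χ := fun y => bump t (y + 2*π*(s/t)))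
      ((contDiff_bump t).comp (contDiff_id.add contDiff_const))
      (fun x => by
        have := bump_periodic t (x + 2*π*(s/t))
        rw [← this]; congr 1; ring)
      (fun x => bump_nonneg _ _) hsI hs.2
    have hd : ∀ y, deriv (fun y => bump t (y + 2*π*(s/t))) y = bumpDeriv t (y + 2*π*(s/t)) := by
      intro y
      rw [deriv_comp_add_const, deriv_bump]
    simp only [hd] at this
    have := h.integral_bump_le_tubeMass ht hsI
    unfold flux
    linarith
  have := setIntegral_mono_on i1 (iJ.add i2) measurableSet_Icc key
  rw [integral_add' iJ i2, e1, e2, hc] at this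
  have hf : 0 ≤ ∫ y in (-π)..π, flux L t y :=
    intervalIntegral.integral_nonneg (by linarith) fun y _ => flux_nonneg hL t y
  have : (t / (2*π)) * (∫ y in (-π)..π, flux L t y) * (∫ y in Icc 0 (2*π), Γ y)
      ≤ (t / (2*π)) * (∫ y in (-π)..π, flux L t y) * (2 * t * A ^ 2) := by gcongr
  linarith

theorem lower_bound (h : Sol u V L A) {t c₀ : ℝ} (ht : 0 < t) (hc₀ : 0 < c₀)
    (hc : ∫ x in Icc (0:ℝ) (2*π), ‖u x 0‖ ^ 2 = c₀ ^ 2)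
    (hA : 128 * √t * A ^ 2 ≤ c₀ ^ 2) (hs7 : 128 * √t ≤ 1) (hLt : L * √t ≤ 1) :
    c₀ ^ 2 ≤ Real.exp (1 / t) / t * ∫ s in Icc (t/4) (3*t), tubeMass u t s := by
  have hp3 := Real.pi_gt_three
  have hp4 := Real.pi_lt_d2
  have hs : 0 < √t := Real.sqrt_pos.2 ht
  have hst : √t ^ 2 = t := Real.sq_sqrt ht.le
  have ht1 : t ≤ 1 / 16384 := by nlinarith
  have hav := h.averaged_energy ht (by linarith) hc
  have hX := le_integral_bump ht (by linarith)
  have hK := integral_flux_le (L := L) ht (by linarith) hLt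
  have mono : ∫ s in Icc t (2*t), tubeMass u t s ≤ ∫ s in Icc (t/4) (3*t), tubeMass u t s := by
    refine setIntegral_mono_set ((h.integrableOn_tubeMass t).mono_set
      (Icc_subset_Icc (by linarith) (by linarith))) ?_
      (Icc_subset_Icc (by linarith) (by linarith)).eventuallyLE
    exact (ae_restrict_iff' measurableSet_Icc).2 (Eventually.of_forall fun s hs =>
      tubeMass_nonneg (by linarith [hs.1]))
  set I := ∫ s in Icc (t/4) (3*t), tubeMass u t s with hI
  -- the flux is absorbed: `36 π · 2 t A² ≤ (72 π / 128) √t c₀² < 2 √t c₀²`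
  have b1 : 36 * π * (2 * t * A ^ 2) ≤ 2 * √t * c₀ ^ 2 := by
    have e : t * A ^ 2 ≤ √t * (c₀ ^ 2 / 128) := by
      calc t * A ^ 2 = √t * (√t * A ^ 2) := by rw [← mul_assoc, ← sq, hst]
        _ ≤ _ := by gcongr; linarith
    have e' : 0 ≤ √t * c₀ ^ 2 := by positivity
    calc 36 * π * (2 * t * A ^ 2) = 72 * π * (t * A ^ 2) := by ring
      _ ≤ 72 * 3.15 * (√t * (c₀ ^ 2 / 128)) := by gcongr
      _ ≤ _ := by linarith
  have b2 : t * √t * c₀ ^ 2 ≤ I := by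
    have g1 : (t / (2*π)) * (9 * √t) * c₀ ^ 2 ≤ (t / (2*π)) * (∫ y in (-π)..π, bump t y) * c₀ ^ 2 := by
      gcongr
    have g2 : (t / (2*π)) * (∫ y in (-π)..π, flux L t y) * (2 * t * A ^ 2)
        ≤ (t / (2*π)) * (36 * π) * (2 * t * A ^ 2) := by gcongr
    have g3 : (t / (2*π)) * (36 * π * (2 * t * A ^ 2)) ≤ (t / (2*π)) * (2 * √t * c₀ ^ 2) := by
      gcongr
    have g4 : (t / (2*π)) * (7 * √t * c₀ ^ 2) ≤ I := by linarith
    refine le_trans ?_ g4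
    rw [div_mul_eq_mul_div, le_div_iff₀ (by positivity)]
    have : 0 ≤ t * √t * c₀ ^ 2 := by positivity
    nlinarith
  have b3 : 1 ≤ Real.exp (1 / t) * √t := by
    have e1 : 1 / t ≤ Real.exp (1 / t) := by linarith [Real.add_one_le_exp (1 / t)]
    have e2 : t ≤ √t := by nlinarith
    calc (1:ℝ) = 1 / t * t := by field_simp
      _ ≤ _ := by gcongr
  calc c₀ ^ 2 = 1 * c₀ ^ 2 := (one_mul _).symm
    _ ≤ Real.exp (1 / t) * √t * c₀ ^ 2 := by gcongr
    _ = Real.exp (1 / t) / t * (t * √t * c₀ ^ 2) := by field_simp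
    _ ≤ _ := by gcongr

end Sol

/-! ### Conclusion -/

/-- The periodic observability inequality (Remark 2 of the paper): there is a universal
constant `c₁ > 0` such that every `2π`-periodic-in-space regular solution of
`∂ₜu = i(∂ₓₓu + Vu)` with `|V| ≤ L`, initial mass `c₀²` on `[0,2π]` and
`H¹`-bound `A`, satisfies, for every `0 < t < t* = min(256A/(c₀L), 2⁻¹⁴(c₀/A)⁴, 4π², 1/L²)`,
`(e^{c₁/t}/t) ∫_{t/4}^{3t} ∫_{{y∈[0,2π] : dist(y±2πs/t, 2πℤ)<8π√t}} (|u|²+s|∂_yu|²) dy ds ≥ c₀²`. -/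
theorem periodic_one_time_lower_bound :
    ∃ c₁ : ℝ, 0 < c₁ ∧
      ∀ (u V : ℝ → ℝ → ℂ) (L c₀ A : ℝ),
        (∀ t ∈ Icc (0:ℝ) 1, ContDiff ℝ 2 (fun x => u x t)) →
        (∀ x : ℝ, ContDiff ℝ 1 (fun t => u x t)) →
        (∀ x t : ℝ, u (x + 2*π) t = u x t) →
        (∀ x t : ℝ, V (x + 2*π) t = V x t) →
        (∀ x : ℝ, ∀ t ∈ Icc (0:ℝ) 1,
          deriv (fun τ => u x τ) t
            = Complex.I *
                (deriv (fun y => deriv (fun z => u z t) y) x + V x t * u x t)) →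
        (∀ x t : ℝ, ‖V x t‖ ≤ L) →
        0 < c₀ → 0 ≤ A →
        (∫ x in Icc (0:ℝ) (2*π), ‖u x 0‖ ^ 2) = c₀ ^ 2 →
        sSup ((fun t => ∫ x in Icc (0:ℝ) (2*π),
            (‖u x t‖ ^ 2 + ‖deriv (fun y => u y t) x‖ ^ 2)) '' Icc (0:ℝ) 1) = A ^ 2 →
        ∀ t : ℝ, 0 < t →
          t < min (min (256 * A / (c₀ * L)) ((2:ℝ) ^ (-14 : ℤ) * (c₀ / A) ^ 4))
              (min (4 * π ^ 2) (1 / L ^ 2)) →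
          c₀ ^ 2 ≤ Real.exp (c₁ / t) / t *
            ∫ s in Icc (t/4) (3*t),
              ∫ y in {y : ℝ | y ∈ Icc (0:ℝ) (2*π) ∧
                  ((∃ k : ℤ, |y + 2*π*(s/t) - 2*π*(k:ℝ)| < 8*π*Real.sqrt t) ∨
                   (∃ k : ℤ, |y - 2*π*(s/t) - 2*π*(k:ℝ)| < 8*π*Real.sqrt t))},
                (‖u y s‖ ^ 2 + s * ‖deriv (fun z => u z s) y‖ ^ 2) := by
  refine ⟨1, one_pos, ?_⟩
  intro u V L c₀ A hcx hct hper _ heq hV hc₀ hA0 hc hsup t ht htlt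
  obtain ⟨⟨h1, h2⟩, -, h4⟩ : (t < 256 * A / (c₀ * L) ∧ t < (2:ℝ) ^ (-14 : ℤ) * (c₀ / A) ^ 4) ∧
      t < 4 * π ^ 2 ∧ t < 1 / L ^ 2 := by simpa only [lt_min_iff] using htlt
  -- division by zero would make the threshold `0`
  have hA : 0 < A := by
    refine lt_of_le_of_ne hA0 fun e => ?_
    rw [← e, mul_zero, zero_div] at h1
    exact absurd ht h1.not_gt
  have hL : 0 < L := by
    refine lt_of_le_of_ne ((norm_nonneg _).trans (hV 0 0)) fun e => ?_
    rw [← e, zero_pow two_ne_zero, div_zero] at h4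
    exact absurd ht h4.not_gt
  -- the supremum of an unbounded set is `0`, which `A > 0` excludes
  have hbdd : BddAbove ((fun t => ∫ x in Icc (0:ℝ) (2*π),
      (‖u x t‖ ^ 2 + ‖deriv (fun y => u y t) x‖ ^ 2)) '' Icc (0:ℝ) 1) := by
    by_contra hb
    rw [Real.sSup_of_not_bddAbove hb] at hsup
    exact absurd hsup (by positivity)
  have h : Sol u V L A := ⟨hcx, hct, hper, heq, hV, fun s hs => by
    rw [← hsup]
    exact le_csSup hbdd (mem_image_of_mem _ hs)⟩
  have hcA : c₀ ^ 2 ≤ A ^ 2 := by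
    have h0 : (0:ℝ) ∈ Icc (0:ℝ) 1 := by simp
    have c0 := h.cont h0
    have c1 := h.cont_dx h0
    rw [← hc]
    refine le_trans ?_ (h.bA 0 h0)
    refine setIntegral_mono (Continuous.integrableOn_Icc (by fun_prop))
      (Continuous.integrableOn_Icc (by fun_prop)) fun y => ?_
    have : 0 ≤ ‖deriv (fun y => u y 0) y‖ ^ 2 := by positivity
    dsimp only
    linarith
  have hsA : 128 * √t * A ^ 2 ≤ c₀ ^ 2 := by
    have e : (2:ℝ) ^ (-14 : ℤ) * (c₀ / A) ^ 4 = (c₀ ^ 2 / A ^ 2 / 128) ^ 2 := by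
      rw [zpow_neg, div_pow]; norm_num; field_simp; norm_num
    rw [e] at h2
    have h3 : √t ≤ c₀ ^ 2 / A ^ 2 / 128 := by
      rw [← Real.sqrt_sq (by positivity : 0 ≤ c₀ ^ 2 / A ^ 2 / 128)]
      exact Real.sqrt_le_sqrt h2.le
    rw [div_div, le_div_iff₀ (by positivity)] at h3
    linarith
  have hs7 : 128 * √t ≤ 1 := by
    have hA2 : 0 < A ^ 2 := by positivity
    have := hsA.trans hcA
    nlinarith
  have hLt : L * √t ≤ 1 := by
    rw [lt_div_iff₀ (by positivity)] at h4
    have e : (L * √t) ^ 2 = t * L ^ 2 := by rw [mul_pow, Real.sq_sqrt ht.le]; ring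
    exact (sq_le_one_iff₀ (by positivity)).1 (by linarith)
  exact h.lower_bound ht hc₀ hc hsA hs7 hLt
end
end

section
/- (Carleman estimate.) Let R > 0 and let φ : [0,1] → ℝ be a smooth function. Then there exists a constant c_n > 0, depending only on the dimension n and on ‖φ'‖_∞ + ‖φ''‖_∞, such that for every σ ≥ c_n R² and every g ∈ C₀^∞(ℝⁿ × ℝ) (smooth and compactly supported in ℝⁿ × (0,1)) whose support is contained in the set {(x,t) : |x/R + φ(t)e₁| ≥ 1}, one has (σ^{3/2}/(c_n R²)) · ‖ e^{σ|x/R + φ(t)e₁|²} g ‖_{L²(ℝⁿ×ℝ)} ≤ ‖ e^{σ|x/R + φ(t)e₁|²} (i∂ₜ + Δ) g ‖_{L²(ℝⁿ×ℝ)}. -/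
/-!
Write `y = x/R + φ(t)e₁`, `ψ = |y|²` and `f = e^{σψ}g`. Conjugating the Schrödinger operator by the
weight gives `e^{σψ}(i∂ₜ + Δ)g = Sf + Af`, where

* `Sf = i∂ₜf + Δf + 4σ²R⁻²|y|²f` is symmetric,
* `Af = -(4σ/R) y·∇f - (2nσ/R²)f - 2iσφ'y₁f` is antisymmetric

(`conjugation`). Hence `‖Sf + Af‖² ≥ 2 Re⟨Sf, Af⟩`, and integrating by parts (`energy_identity`)
turns the right-hand side into the integral of the commutator density

`8σR⁻²|∇f|² + 32σ³R⁻⁴|y|²|f|² + 2σ(φ''y₁ + φ'²)|f|² + 8σR⁻¹φ' Re⟨if, ∂₁f⟩`.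

By Cauchy–Schwarz the last term is absorbed by `8σR⁻²|∇f|² + 2σφ'²|f|²`. On the support of `f` one
has `|y₁| ≤ |y| ≤ |y|²`, so that for `σ ≥ cR²` with `c = 1 + |K|` the `σ³` term dominates
`2σφ''y₁|f|²` and leaves more than `σ³R⁻⁴c⁻²|f|²` (`density_bound`).

Integrations by parts are phrased with `IsNull`, the space of integrable functions of integral
zero: the difference between `2 Re⟨Sf, Af⟩` and the density is an explicit combination of the
divergences provided by `isNull_product`. Complex numbers carry the real inner product
`⟨z, w⟩ = Re(z̄w)`, and `r` stands for `R⁻¹`, `Y k` for the components of `y`.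
-/

open MeasureTheory Real Set

noncomputable section

/-- `ℝⁿ` as a Euclidean space. -/
abbrev Euc (n : ℕ) := EuclideanSpace ℝ (Fin n)

/-- The spatial Laplacian `Δf = ∑ⱼ ∂²f/∂xⱼ²`. -/
def lapl {n : ℕ} (f : Euc n → ℂ) (x : Euc n) : ℂ :=
  ∑ i : Fin n,
    fderiv ℝ (fun y => fderiv ℝ f y (EuclideanSpace.single i (1 : ℝ))) x
      (EuclideanSpace.single i (1 : ℝ))

/-! ### Test functions and null integrands -/

/-- Space-time `ℝⁿ × ℝ`. -/
abbrev SpT (n : ℕ) := Euc n × ℝ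

/-- The derivative of `F` in the fixed direction `v`, as a function of the base point. -/
def dirD {E V : Type*} [NormedAddCommGroup E] [NormedSpace ℝ E] [NormedAddCommGroup V]
    [NormedSpace ℝ V] (v : E) (F : E → V) (p : E) : V := fderiv ℝ F p v

/-- The unit vector of space-time in the `i`-th spatial direction. -/
def ex {n : ℕ} (i : Fin n) : SpT n := (EuclideanSpace.single i (1 : ℝ), 0)

/-- The unit vector of space-time in the time direction. -/
def et {n : ℕ} : SpT n := (0, 1)

/-- Smoothness, in the form used throughout. -/
abbrev Smth {E V : Type*} [NormedAddCommGroup E] [NormedSpace ℝ E] [NormedAddCommGroup V]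
    [NormedSpace ℝ V] (F : E → V) : Prop := ContDiff ℝ (⊤ : ℕ∞) F

lemma Smth.dirD {E V : Type*} [NormedAddCommGroup E] [NormedSpace ℝ E] [NormedAddCommGroup V]
    [NormedSpace ℝ V] {F : E → V} (hF : Smth F) (v : E) : Smth (dirD v F) :=
  (hF.fderiv_right (m := (⊤ : ℕ∞)) (by simp)).clm_apply contDiff_const

lemma Smth.diff {E V : Type*} [NormedAddCommGroup E] [NormedSpace ℝ E] [NormedAddCommGroup V]
    [NormedSpace ℝ V] {F : E → V} (hF : Smth F) : Differentiable ℝ F :=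
  hF.differentiable (by simp)

lemma dirD_comm {E V : Type*} [NormedAddCommGroup E] [NormedSpace ℝ E] [NormedAddCommGroup V]
    [NormedSpace ℝ V] {F : E → V} (hF : Smth F) (v w p : E) :
    dirD v (dirD w F) p = dirD w (dirD v F) p := by
  have h1 : Differentiable ℝ (fderiv ℝ F) :=
    (hF.fderiv_right (m := (⊤ : ℕ∞)) (by simp)).differentiable (by simp)
  have h2 : ∀ a b : E, dirD a (dirD b F) p = fderiv ℝ (fderiv ℝ F) p a b := by
    intro a b
    have := ((h1 p).hasFDerivAt.clm_apply (hasFDerivAt_const b p)).fderiv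
    change fderiv ℝ (fun q => fderiv ℝ F q b) p a = _
    rw [this]; simp
  rw [h2, h2]
  exact (hF.contDiffAt.isSymmSndFDerivAt
    (by simpa using WithTop.coe_le_coe.2 (le_top : (2 : ℕ∞) ≤ ⊤))).eq v w

/-- An integrable function on space-time with vanishing integral. Divergences of compactly
supported fields are of this kind. -/
def IsNull {n : ℕ} (F : SpT n → ℝ) : Prop := Integrable F ∧ ∫ p, F p = 0

lemma IsNull.add {n : ℕ} {F G : SpT n → ℝ} (hF : IsNull F) (hG : IsNull G) :
    IsNull (fun p => F p + G p) :=
  ⟨hF.1.add hG.1, by rw [integral_add hF.1 hG.1, hF.2, hG.2, add_zero]⟩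

lemma IsNull.const_mul {n : ℕ} {F : SpT n → ℝ} (c : ℝ) (hF : IsNull F) :
    IsNull (fun p => c * F p) :=
  ⟨hF.1.const_mul c, by rw [integral_const_mul, hF.2, mul_zero]⟩

lemma IsNull.sum {n : ℕ} {ι : Type*} (s : Finset ι) {F : ι → SpT n → ℝ}
    (hF : ∀ i ∈ s, IsNull (F i)) : IsNull (fun p => ∑ i ∈ s, F i p) :=
  ⟨integrable_finsetSum s fun i hi => (hF i hi).1, by
    rw [integral_finsetSum s fun i hi => (hF i hi).1]
    exact Finset.sum_eq_zero fun i hi => (hF i hi).2⟩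

lemma IsNull.congr {n : ℕ} {F G : SpT n → ℝ} (hF : IsNull F) (h : ∀ p, F p = G p) :
    IsNull G := by
  rwa [show G = F from (funext h).symm]

lemma isNull_dirD {n : ℕ} {h : SpT n → ℝ} (hs : Smth h) (hc : HasCompactSupport h)
    (v : SpT n) : IsNull (dirD v h) := by
  have hi : Integrable (dirD v h) :=
    (hs.dirD v).continuous.integrable_of_hasCompactSupport (hc.fderiv_apply (𝕜 := ℝ) v)
  refine ⟨hi, ?_⟩
  have : (volume : Measure (SpT n)).IsAddHaarMeasure :=
    inferInstanceAs (((volume : Measure (Euc n)).prod (volume : Measure ℝ)).IsAddHaarMeasure)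
  have hi' : Integrable (fun p => fderiv ℝ h p v) := hi
  have := integral_mul_fderiv_eq_neg_fderiv_mul_of_integrable (μ := (volume : Measure (SpT n)))
    (f := fun _ => (1 : ℝ)) (g := h) (v := v) (by simp) (by simpa using hi')
    (by simpa using hs.continuous.integrable_of_hasCompactSupport hc)
    (fun x _ => differentiableAt_const _) (fun x _ => hs.diff x)
  simpa [dirD] using this

/-- The source of all integrations by parts below: `∂ᵥ(a⟨F, G⟩)` integrates to zero. -/
lemma isNull_product {n : ℕ} {a : SpT n → ℝ} {F G : SpT n → ℂ} (ha : Smth a) (hF : Smth F)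
    (hFc : HasCompactSupport F) (hG : Smth G) (v : SpT n) :
    IsNull (fun p => dirD v a p * inner ℝ (F p) (G p) +
      a p * (inner ℝ (F p) (dirD v G p) + inner ℝ (dirD v F p) (G p))) := by
  have hs : Smth (fun p => inner ℝ (F p) (G p)) := hF.inner ℝ hG
  have hc : HasCompactSupport (fun p => a p * inner ℝ (F p) (G p)) := by
    apply hFc.mono'
    refine (Function.support_subset_iff'.2 fun x hx => ?_).trans subset_closure
    simp [Function.notMem_support.1 hx]
  refine (isNull_dirD (ha.mul hs) hc v).congr fun p => ?_
  unfold dirD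
  rw [fderiv_fun_mul (ha.diff p) (hs.diff p)]
  simp only [add_apply, smul_apply, smul_eq_mul]
  rw [fderiv_inner_apply ℝ (hF.diff p) (hG.diff p)]
  ring

/-! ### Integrations by parts for the conjugated operator -/

lemma inner_I_self (z : ℂ) : inner ℝ z (Complex.I * z) = 0 := by
  simp [Complex.inner]; ring

lemma inner_I_anti (z w : ℂ) : inner ℝ (Complex.I * z) w = - inner ℝ (Complex.I * w) z := by
  simp [Complex.inner]; ring

lemma inner_I_I (z w : ℂ) : inner ℝ (Complex.I * z) (Complex.I * w) = inner ℝ z w := by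
  simp [Complex.inner]

lemma dirD_I {n : ℕ} {F : SpT n → ℂ} (hF : Smth F) (v p : SpT n) :
    dirD v (fun q => Complex.I * F q) p = Complex.I * dirD v F p := by
  unfold dirD
  rw [fderiv_const_mul (hF.diff p)]; simp

lemma dirD_sum_sq {n : ℕ} {Y : Fin n → SpT n → ℝ} (hY : ∀ k, Smth (Y k)) (v p : SpT n) :
    dirD v (fun p => ∑ m, Y m p ^ 2) p = ∑ m, 2 * Y m p * dirD v (Y m) p := by
  unfold dirD
  rw [fderiv_fun_sum (fun m _ => ((hY m).diff p).fun_pow 2)]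
  have : ∀ m, fderiv ℝ (fun p => Y m p ^ 2) p v = 2 * Y m p * fderiv ℝ (Y m) p v := by
    intro m
    rw [fderiv_fun_pow 2 ((hY m).diff p)]
    simp
  simp [this]

section Parts

variable {n : ℕ} {f : SpT n → ℂ} {Y : Fin n → SpT n → ℝ} {r : ℝ}

/-- Obtained from `∂ⱼ(2Yₖ⟨∂ⱼf, ∂ₖf⟩) - ∂ₖ(Yₖ|∂ⱼf|²)`. -/
lemma null_hess_grad (hf : Smth f) (hc : HasCompactSupport f) (hY : ∀ k, Smth (Y k))
    (hD : ∀ j k p, dirD (ex j) (Y k) p = if j = k then r else 0) (j k : Fin n) :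
    IsNull (fun p => 2 * Y k p * inner ℝ (dirD (ex j) (dirD (ex j) f) p) (dirD (ex k) f p)
      + (if j = k then 2 * r * ‖dirD (ex j) f p‖ ^ 2 else 0)
      - r * ‖dirD (ex j) f p‖ ^ 2) := by
  have h1 := isNull_product (hY k) (hf.dirD (ex j)) (hc.fderiv_apply (𝕜 := ℝ) _)
    (hf.dirD (ex k)) (ex j)
  have h2 := isNull_product (hY k) (hf.dirD (ex j)) (hc.fderiv_apply (𝕜 := ℝ) _)
    (hf.dirD (ex j)) (ex k)
  refine ((h1.const_mul 2).add (h2.const_mul (-1))).congr fun p => ?_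
  rw [hD, hD, dirD_comm hf (ex j) (ex k), real_inner_comm (dirD (ex j) f p)
    (dirD (ex k) (dirD (ex j) f) p), real_inner_self_eq_norm_sq]
  by_cases h : j = k
  · subst h; simp only [if_true, real_inner_self_eq_norm_sq]; ring
  · simp only [h, if_false, if_true]; ring

/-- Obtained from `∂ⱼ⟨∂ⱼf, f⟩`. -/
lemma null_hess_self (hf : Smth f) (hc : HasCompactSupport f) (j : Fin n) :
    IsNull (fun p => inner ℝ (dirD (ex j) (dirD (ex j) f) p) (f p)
      + ‖dirD (ex j) f p‖ ^ 2) := by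
  have h1 := isNull_product (a := fun _ => (1 : ℝ)) contDiff_const (hf.dirD (ex j))
    (hc.fderiv_apply (𝕜 := ℝ) _) hf (ex j)
  refine h1.congr fun p => ?_
  rw [real_inner_self_eq_norm_sq]
  simp [dirD]; ring

/-- Obtained from `∂ⱼ(w⟨∂ⱼf, if⟩)`, where `⟨∂ⱼf, i∂ⱼf⟩ = 0`. -/
lemma null_hess_I {w : SpT n → ℝ} {ψ : ℝ → ℝ} {z : Fin n}
    (hf : Smth f) (hc : HasCompactSupport f) (hw : Smth w)
    (hD : ∀ j p, dirD (ex j) w p = if j = z then ψ p.2 * r else 0) (j : Fin n) :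
    IsNull (fun p => w p * inner ℝ (dirD (ex j) (dirD (ex j) f) p) (Complex.I * f p)
      + (if j = z then ψ p.2 * r * inner ℝ (dirD (ex j) f p) (Complex.I * f p) else 0)) := by
  have h1 := isNull_product hw (hf.dirD (ex j))
    (hc.fderiv_apply (𝕜 := ℝ) _) (contDiff_const.mul hf) (G := fun p => Complex.I * f p) (ex j)
  refine h1.congr fun p => ?_
  rw [dirD_I hf, inner_I_self, hD]
  split_ifs <;> ring

/-- Obtained from `∂ₜ(Yₖ⟨if, ∂ₖf⟩) - ∂ₖ(Yₖ⟨if, ∂ₜf⟩)`, in which the mixed second derivatives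
cancel. -/
lemma null_time_grad {ψ : ℝ → ℝ} {z : Fin n}
    (hf : Smth f) (hc : HasCompactSupport f) (hY : ∀ k, Smth (Y k))
    (hD : ∀ j k p, dirD (ex j) (Y k) p = if j = k then r else 0)
    (hDt : ∀ k p, dirD et (Y k) p = if k = z then ψ p.2 else 0) (k : Fin n) :
    IsNull (fun p => 2 * Y k p * inner ℝ (Complex.I * dirD et f p) (dirD (ex k) f p)
      + r * inner ℝ (Complex.I * dirD et f p) (f p)
      + (if k = z then ψ p.2 * inner ℝ (Complex.I * f p) (dirD (ex k) f p) else 0)) := by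
  have hIf : Smth (fun p => Complex.I * f p) := contDiff_const.mul hf
  have hIc : HasCompactSupport (fun p => Complex.I * f p) := hc.mul_left
  have h1 := isNull_product (hY k) hIf hIc (hf.dirD (ex k)) et
  have h2 := isNull_product (hY k) hIf hIc (hf.dirD et) (ex k)
  refine (h1.add (h2.const_mul (-1))).congr fun p => ?_
  rw [dirD_I hf, dirD_I hf, hD, hDt, dirD_comm hf et (ex k),
    inner_I_anti (dirD (ex k) f p), inner_I_anti (f p) (dirD et f p)]
  simp only [if_true]
  split_ifs <;> ring

/-- Obtained from `∂ₜ(w|f|²)`. -/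
lemma null_time_I {w w' : SpT n → ℝ} (hf : Smth f) (hc : HasCompactSupport f) (hw : Smth w)
    (hD : ∀ p, dirD et w p = w' p) :
    IsNull (fun p => 2 * w p * inner ℝ (Complex.I * dirD et f p) (Complex.I * f p)
      + w' p * ‖f p‖ ^ 2) := by
  refine (isNull_product hw hf hc hf et).congr fun p => ?_
  rw [inner_I_I, hD, real_inner_self_eq_norm_sq, real_inner_comm (dirD et f p)]
  ring

/-- Obtained from `∂ₖ(|y|²Yₖ|f|²)`. -/
lemma null_pot_grad (hf : Smth f) (hc : HasCompactSupport f) (hY : ∀ k, Smth (Y k))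
    (hD : ∀ j k p, dirD (ex j) (Y k) p = if j = k then r else 0) (k : Fin n) :
    IsNull (fun p => 2 * (∑ m, Y m p ^ 2) * Y k p * inner ℝ (f p) (dirD (ex k) f p)
      + r * (∑ m, Y m p ^ 2) * ‖f p‖ ^ 2 + 2 * r * Y k p ^ 2 * ‖f p‖ ^ 2) := by
  have hs : Smth (fun p => ∑ m, Y m p ^ 2) := ContDiff.sum fun m _ => (hY m).pow 2
  refine (isNull_product (hs.mul (hY k)) hf hc hf (ex k)).congr fun p => ?_
  have h1 : dirD (ex k) (fun p => (∑ m, Y m p ^ 2) * Y k p) p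
      = 2 * r * Y k p ^ 2 + r * ∑ m, Y m p ^ 2 := by
    have h2 : dirD (ex k) (fun p => ∑ m, Y m p ^ 2) p = 2 * r * Y k p := by
      rw [dirD_sum_sq hY]; simp [hD]; ring
    have h3 : dirD (ex k) (fun p => (∑ m, Y m p ^ 2) * Y k p) p
        = dirD (ex k) (fun p => ∑ m, Y m p ^ 2) p * Y k p
          + (∑ m, Y m p ^ 2) * dirD (ex k) (Y k) p := by
      unfold dirD
      rw [fderiv_fun_mul (hs.diff p) ((hY k).diff p)]
      simp; ring
    rw [h3, h2, hD]; simp; ring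
  rw [h1, real_inner_self_eq_norm_sq, real_inner_comm (dirD (ex k) f p) (f p)]
  ring

end Parts

/-- Bilinear expansion of `2⟨Sf, -Af⟩` at a point, in the notation of `energy_identity`. -/
lemma inner_expand {n : ℕ} (ft f : ℂ) (h d : Fin n → ℂ) (Y : Fin n → ℝ) (s a b c : ℝ) :
    2 * inner ℝ (Complex.I * ft + ∑ j, h j + s • f)
        (a • ∑ k, Y k • d k + b • f + c • (Complex.I * f))
      = 2 * a * ∑ j, ∑ k, Y k * inner ℝ (h j) (d k) + 2 * b * ∑ j, inner ℝ (h j) f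
        + 2 * c * ∑ j, inner ℝ (h j) (Complex.I * f)
        + 2 * a * ∑ k, Y k * inner ℝ (Complex.I * ft) (d k)
        + 2 * b * inner ℝ (Complex.I * ft) f
        + 2 * c * inner ℝ (Complex.I * ft) (Complex.I * f)
        + 2 * s * a * ∑ k, Y k * inner ℝ f (d k) + 2 * s * b * ‖f‖ ^ 2 := by
  have e1 : inner ℝ (∑ j, h j) (∑ k, Y k • d k) = ∑ j, ∑ k, Y k * inner ℝ (h j) (d k) := by
    simp only [sum_inner, inner_sum, real_inner_smul_right]
    exact Finset.sum_comm
  have e2 : ∀ z : ℂ, inner ℝ z (∑ k, Y k • d k) = ∑ k, Y k * inner ℝ z (d k) := by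
    intro z; simp only [inner_sum, real_inner_smul_right]
  have e3 : ∀ z : ℂ, inner ℝ (∑ j, h j) z = ∑ j, inner ℝ (h j) z := fun z => sum_inner _ _ _
  simp only [inner_add_left, inner_add_right, real_inner_smul_left, real_inner_smul_right]
  rw [e1, e2, e2, e3, e3, inner_I_self, real_inner_self_eq_norm_sq]
  ring

/-- The conjugated operator `e^{σ|y|²}(i∂ₜ + Δ)e^{-σ|y|²}`, `|y|² = ∑ Yₖ²`, splits into a symmetric part
`Sf = i∂ₜf + Δf + 4σ²r²∑Yₖ² f` and an antisymmetric part `Af`; up to divergences, `2⟨Sf, Af⟩`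
is the commutator form, whose density is the first summand here. The second argument of the
inner product is `-Af`. -/
lemma energy_identity {n : ℕ} {f : SpT n → ℂ} {Y : Fin n → SpT n → ℝ} {r : ℝ} {ψ ψ' : ℝ → ℝ}
    {z : Fin n} (σ : ℝ)
    (hf : Smth f) (hc : HasCompactSupport f) (hY : ∀ k, Smth (Y k)) (hψ : Smth ψ)
    (hψ' : ∀ t, HasDerivAt ψ (ψ' t) t)
    (hD : ∀ j k p, dirD (ex j) (Y k) p = if j = k then r else 0)
    (hDt : ∀ k p, dirD et (Y k) p = if k = z then ψ p.2 else 0) :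
    IsNull (fun p =>
      (8 * σ * r ^ 2 * ∑ j, ‖dirD (ex j) f p‖ ^ 2
        + 32 * σ ^ 3 * r ^ 4 * (∑ k, Y k p ^ 2) * ‖f p‖ ^ 2
        + 2 * σ * (ψ' p.2 * Y z p + ψ p.2 ^ 2) * ‖f p‖ ^ 2
        + 8 * σ * r * ψ p.2 * inner ℝ (Complex.I * f p) (dirD (ex z) f p))
      + 2 * inner ℝ
        (Complex.I * dirD et f p + ∑ j, dirD (ex j) (dirD (ex j) f) p
          + (4 * σ ^ 2 * r ^ 2 * ∑ k, Y k p ^ 2) • f p)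
        ((4 * σ * r) • ∑ k, Y k p • dirD (ex k) f p + (2 * n * σ * r ^ 2) • f p
          + (2 * σ * (ψ p.2 * Y z p)) • (Complex.I * f p))) := by
  have hψ2 : Smth (fun p : SpT n => ψ p.2) := hψ.comp contDiff_snd
  have hw : Smth (fun p : SpT n => ψ p.2 * Y z p) := hψ2.mul (hY z)
  have hψD : ∀ v p : SpT n, dirD v (fun p : SpT n => ψ p.2) p = v.2 * ψ' p.2 := by
    intro v p
    have := ((hψ' p.2).hasFDerivAt.comp p (hasFDerivAt_snd (𝕜 := ℝ) (p := p))).fderiv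
    unfold dirD
    erw [this]
    simp
  have hwD : ∀ v p : SpT n, dirD v (fun p : SpT n => ψ p.2 * Y z p) p
      = v.2 * ψ' p.2 * Y z p + ψ p.2 * dirD v (Y z) p := by
    intro v p
    rw [← hψD]
    unfold dirD
    rw [fderiv_fun_mul (hψ2.diff p) ((hY z).diff p)]
    simp; ring
  have n1 := IsNull.sum Finset.univ fun j _ => IsNull.sum Finset.univ fun k _ =>
    null_hess_grad hf hc hY hD j k
  have n2 := IsNull.sum Finset.univ fun j _ => null_hess_self hf hc j
  have n3 := IsNull.sum Finset.univ fun j _ => null_hess_I (r := r) (ψ := ψ) (z := z) hf hc hw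
    (fun j p => by rw [hwD, hD]; simp [ex]) j
  have n4 := IsNull.sum Finset.univ fun k _ => null_time_grad hf hc hY hD hDt k
  have n5 := null_time_I hf hc hw (w' := fun p => ψ' p.2 * Y z p + ψ p.2 ^ 2)
    (fun p => by rw [hwD, hDt]; simp [et]; ring)
  have n6 := IsNull.sum Finset.univ fun k _ => null_pot_grad hf hc hY hD k
  refine ((((((n1.const_mul (4 * σ * r)).add (n2.const_mul (4 * n * σ * r ^ 2))).add
    (n3.const_mul (4 * σ))).add (n4.const_mul (4 * σ * r))).add (n5.const_mul (2 * σ))).add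
    (n6.const_mul (16 * σ ^ 3 * r ^ 3))).congr fun p => ?_
  rw [inner_expand]
  have c1 : inner ℝ (dirD (ex z) f p) (Complex.I * f p)
      = inner ℝ (Complex.I * f p) (dirD (ex z) f p) := real_inner_comm _ _
  simp only [Finset.sum_add_distrib, Finset.sum_sub_distrib, Finset.sum_ite_eq,
    Finset.sum_ite_eq', Finset.mem_univ, if_true, Finset.sum_const, Finset.card_univ,
    Fintype.card_fin, nsmul_eq_mul, mul_assoc, ← Finset.mul_sum, ← Finset.sum_mul, c1]
  ring

/-! ### Conjugation by the weight -/

lemma smth_exp {n : ℕ} {Ψ : SpT n → ℝ} (hΨ : Smth Ψ) (σ : ℝ) :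
    Smth (fun p => Real.exp (σ * Ψ p)) := (contDiff_const.mul hΨ).exp

lemma dirD_weight {n : ℕ} {Ψ : SpT n → ℝ} {F : SpT n → ℂ} (hΨ : Smth Ψ) (hF : Smth F) (σ : ℝ)
    (v p : SpT n) :
    dirD v (fun q => Real.exp (σ * Ψ q) • F q) p
      = Real.exp (σ * Ψ p) • (dirD v F p + (σ * dirD v Ψ p) • F p) := by
  unfold dirD
  rw [fderiv_fun_smul ((smth_exp hΨ σ).diff p) (hF.diff p),
    fderiv_exp ((hΨ.diff p).const_mul σ), fderiv_const_mul (hΨ.diff p)]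
  simp only [add_apply, smul_apply, ContinuousLinearMap.smulRight_apply, smul_eq_mul, smul_add,
    smul_smul, mul_assoc]

lemma dirD_smul_real {n : ℕ} {a : SpT n → ℝ} {F : SpT n → ℂ} (ha : Smth a) (hF : Smth F)
    (v p : SpT n) :
    dirD v (fun q => a q • F q) p = a p • dirD v F p + dirD v a p • F p := by
  unfold dirD
  rw [fderiv_fun_smul (ha.diff p) (hF.diff p)]
  simp

/-- `e^{σ|y|²}(i∂ₜ + Δ)G = Sf + Af` for `f = e^{σ|y|²}G`, in the notation of `energy_identity`. -/
lemma conjugation {n : ℕ} {G : SpT n → ℂ} {Y : Fin n → SpT n → ℝ} {r : ℝ} {ψ : ℝ → ℝ}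
    {z : Fin n} (σ : ℝ) (hG : Smth G) (hY : ∀ k, Smth (Y k))
    (hD : ∀ j k p, dirD (ex j) (Y k) p = if j = k then r else 0)
    (hDt : ∀ k p, dirD et (Y k) p = if k = z then ψ p.2 else 0)
    {f : SpT n → ℂ} (hf : f = fun p => Real.exp (σ * ∑ k, Y k p ^ 2) • G p) (p : SpT n) :
    Real.exp (σ * ∑ k, Y k p ^ 2) •
        (Complex.I * dirD et G p + ∑ j, dirD (ex j) (dirD (ex j) G) p)
      = (Complex.I * dirD et f p + ∑ j, dirD (ex j) (dirD (ex j) f) p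
          + (4 * σ ^ 2 * r ^ 2 * ∑ k, Y k p ^ 2) • f p)
        - ((4 * σ * r) • ∑ k, Y k p • dirD (ex k) f p + (2 * n * σ * r ^ 2) • f p
          + (2 * σ * (ψ p.2 * Y z p)) • (Complex.I * f p)) := by
  have hs : Smth (fun p => ∑ m, Y m p ^ 2) := ContDiff.sum fun m _ => (hY m).pow 2
  have hsx : ∀ j p, dirD (ex j) (fun p => ∑ m, Y m p ^ 2) p = 2 * r * Y j p := by
    intro j p; rw [dirD_sum_sq hY]; simp [hD]; ring
  have hst : ∀ p, dirD et (fun p => ∑ m, Y m p ^ 2) p = 2 * Y z p * ψ p.2 := by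
    intro p; rw [dirD_sum_sq hY]; simp [hDt]
  have hft : dirD et f p = Real.exp (σ * ∑ k, Y k p ^ 2) •
      (dirD et G p + (σ * (2 * Y z p * ψ p.2)) • G p) := by
    rw [hf, dirD_weight hs hG, hst]
  have hfx : ∀ j q, dirD (ex j) f q = Real.exp (σ * ∑ k, Y k q ^ 2) •
      (dirD (ex j) G q + (σ * (2 * r * Y j q)) • G q) := by
    intro j q; rw [hf, dirD_weight hs hG, hsx]
  have hfxx : ∀ j, dirD (ex j) (dirD (ex j) f) p = Real.exp (σ * ∑ k, Y k p ^ 2) •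
      (dirD (ex j) (dirD (ex j) G) p + (2 * (σ * (2 * r * Y j p))) • dirD (ex j) G p
        + (2 * σ * r ^ 2 + (σ * (2 * r * Y j p)) ^ 2) • G p) := by
    intro j
    have ha : Smth (fun q => σ * (2 * r * Y j q)) :=
      contDiff_const.mul (contDiff_const.mul (hY j))
    have haG : Smth (fun q => (σ * (2 * r * Y j q)) • G q) := ha.smul hG
    have haD : dirD (ex j) (fun q => σ * (2 * r * Y j q)) p = 2 * σ * r ^ 2 := by
      have := hD j j p
      simp only [if_true] at this
      unfold dirD at this ⊢
      rw [fderiv_const_mul (((hY j).diff p).const_mul _), fderiv_const_mul ((hY j).diff p)]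
      simp [this]; ring
    have hsum : dirD (ex j) (fun q => dirD (ex j) G q + (σ * (2 * r * Y j q)) • G q) p
        = dirD (ex j) (dirD (ex j) G) p
          + dirD (ex j) (fun q => (σ * (2 * r * Y j q)) • G q) p := by
      have h1 := (hG.dirD (ex j)).diff p
      have h2 := haG.diff p
      change fderiv ℝ _ p _ = fderiv ℝ _ p _ + fderiv ℝ _ p _
      rw [fderiv_fun_add h1 h2]; rfl
    rw [show dirD (ex j) f = _ from funext (hfx j),
      dirD_weight hs ((hG.dirD (ex j)).add haG), hsx, hsum, dirD_smul_real ha hG, haD]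
    congr 1
    simp only [Complex.real_smul]
    push_cast
    ring
  have hterm : ∀ j, dirD (ex j) (dirD (ex j) f) p = Real.exp (σ * ∑ k, Y k p ^ 2) •
      dirD (ex j) (dirD (ex j) G) p + (4 * σ * r) • (Y j p • dirD (ex j) f p)
        + (2 * σ * r ^ 2) • f p - (4 * σ ^ 2 * r ^ 2 * Y j p ^ 2) • f p := by
    intro j
    rw [hfxx, hfx, hf]
    simp only [Complex.real_smul]
    push_cast
    ring
  simp only [hterm, Finset.sum_add_distrib, Finset.sum_sub_distrib, ← Finset.smul_sum,
    ← Finset.sum_smul, ← Finset.mul_sum, Finset.sum_const, Finset.card_univ, Fintype.card_fin]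
  rw [hft, hf]
  simp only [Complex.real_smul, nsmul_eq_mul]
  push_cast
  ring

/-! ### The estimate -/

/-- Pointwise lower bound for the density of the commutator form, with `q = |f|`, `N = |y|²`,
`S = |∇f|²`, `D = |∂₁f|`, `a = φ'` and `b = φ''`. The gradient term absorbs the cross term
`8σra·ip` at the price of exactly `2σa²q²`, which is available; then `c ≤ c² ≤ σ²r⁴` and
`|b y| ≤ cN` control what is left. -/
lemma density_bound {σ r c q a b y N ip D S : ℝ} (hσ : 0 < σ) (hc : 1 ≤ c) (hcσ : c ≤ σ * r ^ 2)
    (hbc : |b| ≤ c) (hq : 0 ≤ q) (hN : q ≠ 0 → 1 ≤ N) (hy : y ^ 2 ≤ N)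
    (hDS : D ^ 2 ≤ S) (hip : |ip| ≤ q * D) :
    σ ^ 3 * r ^ 4 / c ^ 2 * q ^ 2 ≤ 8 * σ * r ^ 2 * S + 32 * σ ^ 3 * r ^ 4 * N * q ^ 2
      + 2 * σ * (b * y + a ^ 2) * q ^ 2 + 8 * σ * r * a * ip := by
  have h1 : 0 ≤ 8 * σ * r ^ 2 * S + 2 * σ * a ^ 2 * q ^ 2 + 8 * σ * r * a * ip := by
    have e1 : |r * a * ip| ≤ |r * a| * (q * D) := by
      rw [abs_mul]; exact mul_le_mul_of_nonneg_left hip (abs_nonneg _)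
    have e2 := (abs_le.1 e1).1
    have e3 : |r * a| = |r| * |a| := abs_mul _ _
    have e4 := sq_nonneg (2 * (|r| * D) - |a| * q)
    have e5 : |r| ^ 2 = r ^ 2 := sq_abs r
    have e6 : |a| ^ 2 = a ^ 2 := sq_abs a
    have e7 : r ^ 2 * D ^ 2 ≤ r ^ 2 * S := mul_le_mul_of_nonneg_left hDS (sq_nonneg r)
    have e8 : 0 ≤ 4 * (r ^ 2 * S) + a ^ 2 * q ^ 2 + 4 * (r * a * ip) := by
      rw [e3] at e2
      have : 4 * (|r| * |a|) * (q * D) ≤ 4 * (r ^ 2 * D ^ 2) + a ^ 2 * q ^ 2 := by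
        rw [← e5, ← e6]; nlinarith
      linarith
    have := mul_nonneg hσ.le e8
    linarith
  rcases eq_or_ne q 0 with h0 | h0
  · subst h0
    have : 0 ≤ 8 * σ * r ^ 2 * S + 8 * σ * r * a * ip := by simpa using h1
    simpa using this
  have hN1 := hN h0
  have hyN : |y| ≤ N := by
    have : |y| ^ 2 ≤ N := by rwa [sq_abs]
    nlinarith [abs_nonneg y]
  have hby : -(c * N) ≤ b * y := by
    have : |b * y| ≤ c * N := by
      rw [abs_mul]; exact mul_le_mul hbc hyN (abs_nonneg _) (by linarith)
    exact (abs_le.1 this).1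
  have hs2 : c * c ≤ (σ * r ^ 2) * (σ * r ^ 2) := mul_le_mul hcσ hcσ (by linarith) (by linarith)
  have hX : c ≤ σ ^ 2 * r ^ 4 := by nlinarith
  have hdiv : σ ^ 3 * r ^ 4 / c ^ 2 ≤ σ ^ 3 * r ^ 4 :=
    div_le_self (by positivity) (one_le_pow₀ hc)
  have hX0 : 0 ≤ σ ^ 2 * r ^ 4 := by positivity
  have h2 : σ ^ 2 * r ^ 4 ≤ 32 * (σ ^ 2 * r ^ 4) * N + 2 * (b * y) := by nlinarith
  have h3 : σ ^ 3 * r ^ 4 / c ^ 2 ≤ 32 * σ ^ 3 * r ^ 4 * N + 2 * σ * (b * y) := by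
    have := mul_le_mul_of_nonneg_left h2 hσ.le
    nlinarith
  have := mul_le_mul_of_nonneg_right h3 (sq_nonneg q)
  linarith

/-- The estimate over the product space, before extracting square roots, for a centre
that moves along the direction `z`: `Y k` are the components of `y`, and `∂ₜy = ψ(t)e_z`. -/
lemma carleman_moving {n : ℕ} {z : Fin n} {ψ ψ' : ℝ → ℝ} {r σ c : ℝ} {Y : Fin n → SpT n → ℝ}
    (hσ0 : 0 < σ) (hc : 1 ≤ c) (hcσ : c ≤ σ * r ^ 2) (hψs : Smth ψ)
    (hψ' : ∀ t, HasDerivAt ψ (ψ' t) t) (hφ2 : ∀ t, |ψ' t| ≤ c) (hY : ∀ k, Smth (Y k))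
    (hD : ∀ j k p, dirD (ex j) (Y k) p = if j = k then r else 0)
    (hDt : ∀ k p, dirD et (Y k) p = if k = z then ψ p.2 else 0) {G L : SpT n → ℂ}
    (hG : Smth G) (hGc : HasCompactSupport G) (hsupp : ∀ p, G p ≠ 0 → 1 ≤ ∑ k, Y k p ^ 2)
    (hL : L = fun p => Complex.I * dirD et G p + ∑ j, dirD (ex j) (dirD (ex j) G) p)
    {W : SpT n → ℝ} (hW : W = fun p => Real.exp (σ * ∑ k, Y k p ^ 2)) :
    Integrable (fun p => (W p * ‖G p‖) ^ 2) ∧ Integrable (fun p => (W p * ‖L p‖) ^ 2) ∧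
    σ ^ 3 * r ^ 4 / c ^ 2 * ∫ p, (W p * ‖G p‖) ^ 2 ≤ ∫ p, (W p * ‖L p‖) ^ 2 := by
  have hs : Smth (fun p => ∑ m, Y m p ^ 2) := ContDiff.sum fun m _ => (hY m).pow 2
  have hWs : Smth W := by rw [hW]; exact smth_exp hs σ
  have hWpos : ∀ p, 0 < W p := fun p => by rw [hW]; exact Real.exp_pos _
  set f : SpT n → ℂ := fun p => W p • G p with hfdef
  have hf : Smth f := hWs.smul hG
  have hfc : HasCompactSupport f := by
    refine hGc.mono fun p hp h => hp ?_
    simp [hfdef, h]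
  have hfn : ∀ p, ‖f p‖ = W p * ‖G p‖ := fun p => by
    rw [hfdef]; simp only [norm_smul, Real.norm_eq_abs, abs_of_pos (hWpos p)]
  have hLs : Smth L := by
    rw [hL]
    exact (contDiff_const.mul (hG.dirD _)).add (ContDiff.sum fun j _ => (hG.dirD _).dirD _)
  have hLc : HasCompactSupport L := by
    refine hGc.of_isClosed_subset (isClosed_tsupport _) ?_
    refine closure_minimal (fun p hp => ?_) (isClosed_tsupport _)
    by_contra hpn
    have hd : ∀ (F : SpT n → ℂ) (v : SpT n), p ∉ tsupport F → p ∉ tsupport (dirD v F) :=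
      fun F v h h' => h (tsupport_fderiv_apply_subset ℝ v h')
    apply hp
    simp only [hL]
    rw [image_eq_zero_of_notMem_tsupport (hd G et hpn), mul_zero, zero_add]
    exact Finset.sum_eq_zero fun j _ =>
      image_eq_zero_of_notMem_tsupport (hd _ _ (hd G (ex j) hpn))
  have hi1 : Integrable (fun p => (W p * ‖G p‖) ^ 2) := by
    refine Continuous.integrable_of_hasCompactSupport
      ((hWs.continuous.mul hG.continuous.norm).pow 2) ?_
    refine hGc.mono fun p hp h => hp ?_
    simp [h]
  have hi2 : Integrable (fun p => (W p * ‖L p‖) ^ 2) := by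
    refine Continuous.integrable_of_hasCompactSupport
      ((hWs.continuous.mul hLs.continuous.norm).pow 2) ?_
    refine hLc.mono fun p hp h => hp ?_
    simp [h]
  refine ⟨hi1, hi2, ?_⟩
  have hnull := energy_identity (ψ := ψ) (ψ' := ψ') (z := z) σ hf hfc hY hψs
    hψ' hD hDt
  have hint := integral_add hnull.1 hi2
  rw [hnull.2, zero_add] at hint
  rw [← integral_const_mul, ← hint]
  refine integral_mono (hi1.const_mul _) (hnull.1.add hi2) fun p => ?_
  have hconj := conjugation (z := z) (ψ := ψ) σ hG hY hD hDt (f := f)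
    (by rw [hfdef, hW]) p
  have hLn : W p * ‖L p‖ = ‖Real.exp (σ * ∑ k, Y k p ^ 2) •
      (Complex.I * dirD et G p + ∑ j, dirD (ex j) (dirD (ex j) G) p)‖ := by
    rw [norm_smul, Real.norm_eq_abs, abs_of_pos (Real.exp_pos _), hL, hW]
  rw [hconj] at hLn
  dsimp only
  rw [hLn, ← hfn, norm_sub_sq_real]
  have hden := density_bound (a := ψ p.2) (b := ψ' p.2) (q := ‖f p‖)
    (y := Y z p) (N := ∑ k, Y k p ^ 2) (D := ‖dirD (ex z) f p‖)
    (ip := inner ℝ (Complex.I * f p) (dirD (ex z) f p))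
    (S := ∑ j, ‖dirD (ex j) f p‖ ^ 2) hσ0 hc hcσ (hφ2 p.2) (norm_nonneg _)
    (by
      intro h
      have hg0 : G p ≠ 0 := by
        rintro h0
        apply h
        rw [hfn, h0]; simp
      exact hsupp p hg0)
    (Finset.single_le_sum (f := fun k => Y k p ^ 2) (fun k _ => sq_nonneg _)
      (Finset.mem_univ z))
    (Finset.single_le_sum (f := fun k => ‖dirD (ex k) f p‖ ^ 2) (fun k _ => sq_nonneg _)
      (Finset.mem_univ z))
    (by simpa using abs_real_inner_le_norm (Complex.I * f p) (dirD (ex z) f p))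
  refine hden.trans ?_
  have h1 := sq_nonneg ‖Complex.I * dirD et f p + ∑ j, dirD (ex j) (dirD (ex j) f) p
          + (4 * σ ^ 2 * r ^ 2 * ∑ k, Y k p ^ 2) • f p‖
  have h2 := sq_nonneg ‖(4 * σ * r) • ∑ k, Y k p • dirD (ex k) f p + (2 * n * σ * r ^ 2) • f p
          + (2 * σ * (ψ p.2 * Y z p)) • (Complex.I * f p)‖
  linarith


/-- The estimate over the product space for the phase of the theorem. -/
lemma carleman_sq {n : ℕ} (z : Fin n) {φ : ℝ → ℝ} (hφ : Smth φ) {R σ c : ℝ} (hR : 0 < R)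
    (hc : 1 ≤ c) (hφ2 : ∀ t, |deriv (deriv φ) t| ≤ c) (hσ : c * R ^ 2 ≤ σ) {G L : SpT n → ℂ}
    (hG : Smth G) (hGc : HasCompactSupport G)
    (hsupp : ∀ p, G p ≠ 0 → 1 ≤ ‖R⁻¹ • p.1 + φ p.2 • EuclideanSpace.single z (1 : ℝ)‖)
    (hL : L = fun p => Complex.I * dirD et G p + ∑ j, dirD (ex j) (dirD (ex j) G) p)
    {W : SpT n → ℝ}
    (hW : W = fun p => Real.exp (σ * ‖R⁻¹ • p.1 + φ p.2 • EuclideanSpace.single z (1 : ℝ)‖ ^ 2)) :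
    Integrable (fun p => (W p * ‖G p‖) ^ 2) ∧ Integrable (fun p => (W p * ‖L p‖) ^ 2) ∧
    σ ^ 3 * R⁻¹ ^ 4 / c ^ 2 * ∫ p, (W p * ‖G p‖) ^ 2 ≤ ∫ p, (W p * ‖L p‖) ^ 2 := by
  set r := R⁻¹ with hr
  set Y : Fin n → SpT n → ℝ := fun k p => r * p.1 k + φ p.2 * (if k = z then 1 else 0) with hYdef
  have hcoord : ∀ k, Smth (fun p : SpT n => p.1 k) := fun k =>
    (EuclideanSpace.proj k : Euc n →L[ℝ] ℝ).contDiff.comp contDiff_fst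
  have hφs : Smth (fun p : SpT n => φ p.2) := hφ.comp contDiff_snd
  have hY : ∀ k, Smth (Y k) := fun k =>
    (contDiff_const.mul (hcoord k)).add (hφs.mul contDiff_const)
  have hψ' : ∀ t, HasDerivAt φ (deriv φ t) t := fun t => (hφ.diff t).hasDerivAt
  have hψs : Smth (deriv φ) := by
    have h : dirD 1 φ = deriv φ := funext fun t => by simp [dirD]
    rw [← h]; exact hφ.dirD 1
  have hYD : ∀ k (v p : SpT n), dirD v (Y k) p
      = r * v.1 k + v.2 * deriv φ p.2 * (if k = z then 1 else 0) := by
    intro k v p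
    have h1 : HasFDerivAt (fun p : SpT n => p.1 k)
        ((EuclideanSpace.proj k : Euc n →L[ℝ] ℝ).comp
          (ContinuousLinearMap.fst ℝ (Euc n) ℝ)) p :=
      ((EuclideanSpace.proj k : Euc n →L[ℝ] ℝ).comp
        (ContinuousLinearMap.fst ℝ (Euc n) ℝ)).hasFDerivAt
    have h2 := (hψ' p.2).hasFDerivAt.comp p (hasFDerivAt_snd (𝕜 := ℝ) (p := p))
    have h3 := (h1.const_mul r).add (h2.mul_const (if k = z then (1 : ℝ) else 0))
    have h4 : fderiv ℝ (Y k) p = _ := h3.fderiv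
    unfold dirD
    rw [h4]
    split_ifs <;> simp
  have hD : ∀ j k p, dirD (ex j) (Y k) p = if j = k then r else 0 := by
    intro j k p; rw [hYD]; simp [ex, eq_comm]
  have hDt : ∀ k p, dirD et (Y k) p = if k = z then deriv φ p.2 else 0 := by
    intro k p; rw [hYD]; simp [et]
  have hnorm : ∀ p : SpT n, ‖r • p.1 + φ p.2 • EuclideanSpace.single z (1 : ℝ)‖ ^ 2
      = ∑ k, Y k p ^ 2 := by
    intro p
    rw [EuclideanSpace.real_norm_sq_eq]
    simp [hYdef]
  have hW' : W = fun p => Real.exp (σ * ∑ k, Y k p ^ 2) := by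
    rw [hW]; funext p; rw [hnorm]
  have hσ0 : 0 < σ := lt_of_lt_of_le (by positivity) hσ
  have hcσ : c ≤ σ * r ^ 2 := by
    rw [hr, inv_pow, ← div_eq_mul_inv, le_div_iff₀ (by positivity)]; exact hσ
  refine carleman_moving (z := z) hσ0 hc hcσ hψs (fun t => (hψs.diff t).hasDerivAt) hφ2 hY hD hDt
    hG hGc (fun p hp => ?_) hL hW'
  rw [← hnorm]
  exact one_le_pow₀ (hsupp p hp)

/-- Lemma 2 of the paper (Carleman estimate).  For every smooth `φ : [0,1] → ℝ` with
`‖φ'‖_∞ + ‖φ''‖_∞ ≤ K` there is a constant `c = c(n, K) > 0` such that for all `R > 0`,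
`σ ≥ cR²` and all `g ∈ C₀^∞(ℝⁿ×ℝ)` supported in `ℝⁿ × (0,1)` and in
`{(x,t) : |x/R + φ(t)e₁| ≥ 1}`, one has
`(σ^{3/2}/(cR²)) ‖e^{σ|x/R+φ(t)e₁|²} g‖_{L²} ≤ ‖e^{σ|x/R+φ(t)e₁|²} (i∂ₜ+Δ)g‖_{L²}`. -/
theorem carleman_estimate (n : ℕ) (hn : 0 < n) (K : ℝ) :
    ∃ c : ℝ, 0 < c ∧
      ∀ φ : ℝ → ℝ, ContDiff ℝ (⊤ : ℕ∞) φ →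
        (∀ t : ℝ, |deriv φ t| + |deriv (deriv φ) t| ≤ K) →
        ∀ R : ℝ, 0 < R → ∀ σ : ℝ, c * R ^ 2 ≤ σ →
        ∀ g : Euc n → ℝ → ℂ,
          ContDiff ℝ (⊤ : ℕ∞) (fun p : Euc n × ℝ => g p.1 p.2) →
          HasCompactSupport (fun p : Euc n × ℝ => g p.1 p.2) →
          tsupport (fun p : Euc n × ℝ => g p.1 p.2) ⊆ Set.univ ×ˢ Ioo (0:ℝ) 1 →
          (Function.support (fun p : Euc n × ℝ => g p.1 p.2) ⊆
            {p : Euc n × ℝ |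
              1 ≤ ‖R⁻¹ • p.1 + φ p.2 • EuclideanSpace.single (⟨0, hn⟩ : Fin n) (1:ℝ)‖}) →
          σ ^ ((3:ℝ)/2) / (c * R ^ 2) *
              Real.sqrt (∫ t : ℝ, ∫ x : Euc n,
                (Real.exp (σ * ‖R⁻¹ • x +
                    φ t • EuclideanSpace.single (⟨0, hn⟩ : Fin n) (1:ℝ)‖ ^ 2) *
                  ‖g x t‖) ^ 2)
            ≤ Real.sqrt (∫ t : ℝ, ∫ x : Euc n,
                (Real.exp (σ * ‖R⁻¹ • x +
                    φ t • EuclideanSpace.single (⟨0, hn⟩ : Fin n) (1:ℝ)‖ ^ 2) *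
                  ‖Complex.I * deriv (fun τ => g x τ) t + lapl (fun y => g y t) x‖) ^ 2) := by
  refine ⟨1 + |K|, by positivity, ?_⟩
  intro φ hφ hK R hR σ hσ g hg hgc _ hsupp
  set c := 1 + |K| with hcdef
  have hc1 : 1 ≤ c := by rw [hcdef]; linarith [abs_nonneg K]
  have hφ2 : ∀ t, |deriv (deriv φ) t| ≤ c := fun t => by
    have := hK t
    have := abs_nonneg (deriv φ t)
    have := le_abs_self K
    rw [hcdef]; linarith
  have hσ0 : 0 < σ := lt_of_lt_of_le (by positivity) hσ
  set G : SpT n → ℂ := fun p => g p.1 p.2 with hGdef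
  have hG : Smth G := hg
  obtain ⟨hi1, hi2, hle⟩ := carleman_sq (⟨0, hn⟩ : Fin n) hφ hR hc1 hφ2 hσ hG hgc
    (fun p hp => hsupp hp) rfl rfl
  have hslice : ∀ (F : SpT n → ℂ), Smth F → ∀ x t (v : Euc n),
      fderiv ℝ (fun y => F (y, t)) x v = dirD (v, (0 : ℝ)) F (x, t) := by
    intro F hF x t v
    have := (HasFDerivAt.comp x (hF.diff (x, t)).hasFDerivAt (hasFDerivAt_prodMk_left (𝕜 := ℝ) x t)).fderiv
    unfold dirD
    change fderiv ℝ (F ∘ fun y => (y, t)) x v = _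
    rw [this]; simp
  have hop : ∀ x t, Complex.I * deriv (fun τ => g x τ) t + lapl (fun y => g y t) x
      = Complex.I * dirD et G (x, t) + ∑ j, dirD (ex j) (dirD (ex j) G) (x, t) := by
    intro x t
    have h1 : deriv (fun τ => g x τ) t = dirD et G (x, t) := by
      have := ((hG.diff (x, t)).hasFDerivAt.comp t
        (hasFDerivAt_prodMk_right (𝕜 := ℝ) x t)).hasDerivAt.deriv
      change deriv (G ∘ fun τ => (x, τ)) t = _
      rw [this]; simp [dirD, et]
    have h2 : lapl (fun y => g y t) x = ∑ j, dirD (ex j) (dirD (ex j) G) (x, t) := by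
      unfold lapl
      refine Finset.sum_congr rfl fun j _ => ?_
      have h3 : (fun y => fderiv ℝ (fun y => g y t) y (EuclideanSpace.single j (1 : ℝ)))
          = fun y => dirD (ex j) G (y, t) := funext fun y => hslice G hG y t _
      rw [h3]
      exact hslice _ (hG.dirD _) x t _
    rw [h1, h2]
  simp only [hop]
  rw [Measure.volume_eq_prod] at hi1 hi2 hle
  rw [integral_prod_symm _ hi1, integral_prod_symm _ hi2] at hle
  have hk : 0 ≤ σ ^ ((3 : ℝ) / 2) / (c * R ^ 2) := by positivity
  have hk2 : (σ ^ ((3 : ℝ) / 2) / (c * R ^ 2)) ^ 2 = σ ^ 3 * R⁻¹ ^ 4 / c ^ 2 := by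
    have : (σ ^ ((3 : ℝ) / 2)) ^ 2 = σ ^ 3 := by
      rw [← Real.rpow_natCast, ← Real.rpow_mul hσ0.le, ← Real.rpow_natCast]; norm_num
    rw [div_pow, this]
    field_simp
  rw [← Real.sqrt_sq hk, ← Real.sqrt_mul (sq_nonneg _), hk2]
  exact Real.sqrt_le_sqrt hle
end
end
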